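/- arXiv:1702.08373 — 2 statements merged into one kernel-verified Lean document; each statement's English description precedes it below -/
import Mathlib

section
/- For every ε > 0 there exist constants A > 0, η > 0 and n₀ such that the following holds: for all n ≥ n₀, all integers m with d := 2m/n satisfying n d² > 0, and every sequence d* = (d_1,…,d_n) of nonnegative integers with Σ_i d_i = 2m and Δ(d*)⁶ + n^ε ≤ η · n d², one has Pr_{G(n,m)}(d*) = Pr_{B_m}(d*) · exp( 1/4 − γ₂²/(4μ²(1−μ)²) ) · (1 + E) with |E| ≤ A·( (Δ(d*)⁶ + n^ε)/(n d²) + n^{ε−1/2} ), where Δ(d*) = max_i d_i, μ = d/(n−1) and γ₂ = (n−1)^{−2} Σ_i (d_i − d)². -/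
open Finset

noncomputable section

/-- Simple graphs on vertex set `[n]`, encoded as finsets of non-diagonal unordered pairs. -/
def Graphs (n : ℕ) : Finset (Finset (Sym2 (Fin n))) :=
  Finset.univ.filter (fun E => ∀ e ∈ E, ¬ e.IsDiag)

/-- Degree of vertex `i` in the graph `E`. -/
def deg {n : ℕ} (E : Finset (Sym2 (Fin n))) (i : Fin n) : ℕ :=
  (E.filter (fun e => i ∈ e)).card

/-- Number of simple graphs on `[n]` with degree sequence `D`. -/
def gcount (n : ℕ) (D : Fin n → ℕ) : ℕ :=
  ((Graphs n).filter (fun E => ∀ i, deg E i = D i)).card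

/-- `Pr_{D(G(n,m))}(D)`: probability that a uniformly random graph on `[n]` with exactly `m`
edges has degree sequence `D`. -/
def prG (n m : ℕ) (D : Fin n → ℕ) : ℝ :=
  (((Graphs n).filter (fun E => E.card = m ∧ ∀ i, deg E i = D i)).card : ℝ) /
    (((Graphs n).filter (fun E => E.card = m)).card : ℝ)

/-- `Pr_{B_m}(D)`: probability of `D` for `n` independent `Bin(n-1,p)` variables conditioned
on the sum being `2m` (independent of `p`). -/
def prB (n m : ℕ) (D : Fin n → ℕ) : ℝ :=
  if ∑ i, D i = 2 * m then
    (∏ i, ((n - 1).choose (D i) : ℝ)) / ((n * (n - 1)).choose (2 * m) : ℝ)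
  else 0

/-!
Count the realizations of a degree sequence of sum `M` and maximum `Δ` by comparing it with the
sequence in which one half-edge is moved from a vertex to a new leaf.  Switchings determine the
ratio of the two counts up to a relative error of order `Δ⁴ / M²`, and after at most `M` such moves
all degrees are `0` or `1`, where the realizations are the `(M - 1)!!` perfect matchings.  The
accumulated exponent telescopes.  The ratio of the two probabilities is this count times an
explicit quotient of falling products, whose logarithm is expanded to second order.
-/

/-! ### Relative errors -/

/-- `x ≤ y` up to a relative error `θ`. Stated without division so that the errors simply add up
under transitivity. -/
def AlmostLE (θ x y : ℝ) : Prop := (1 - θ) * x ≤ y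

/-- `x` and `y` agree up to a relative error `θ`. -/
def AlmostEq (θ x y : ℝ) : Prop := AlmostLE θ x y ∧ AlmostLE θ y x

section RelativeErrors

variable {ι : Type*} {s : Finset ι} {f g : ι → ℝ} {θ θ' x y z c : ℝ}

lemma AlmostLE.of_le (h : x ≤ y) (hθ : 0 ≤ θ) (hx : 0 ≤ x) : AlmostLE θ x y := by
  unfold AlmostLE
  nlinarith

lemma AlmostLE.mono_left (h : AlmostLE θ y z) (hxy : x ≤ y) (hθ : θ ≤ 1) : AlmostLE θ x z :=
  (mul_le_mul_of_nonneg_left hxy (sub_nonneg.2 hθ)).trans h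

lemma AlmostLE.mono_right (h : AlmostLE θ x y) (hyz : y ≤ z) : AlmostLE θ x z := le_trans h hyz

lemma AlmostLE.const_mul (h : AlmostLE θ x y) (hc : 0 ≤ c) : AlmostLE θ (c * x) (c * y) := by
  have := mul_le_mul_of_nonneg_left h hc
  unfold AlmostLE
  linarith

lemma AlmostLE.trans (h : AlmostLE θ x y) (h' : AlmostLE θ' y z) (hx : 0 ≤ x) (hθ : 0 ≤ θ)
    (hθ' : 0 ≤ θ') (hθ'1 : θ' ≤ 1) : AlmostLE (θ + θ') x z := by
  have hcross : 0 ≤ θ * θ' * x := by positivity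
  calc (1 - (θ + θ')) * x ≤ (1 - θ') * ((1 - θ) * x) := by linarith
    _ ≤ (1 - θ') * y := mul_le_mul_of_nonneg_left h (by linarith)
    _ ≤ z := h'

lemma AlmostLE.sum (h : ∀ i ∈ s, AlmostLE θ (f i) (g i)) :
    AlmostLE θ (∑ i ∈ s, f i) (∑ i ∈ s, g i) := by
  rw [AlmostLE, mul_sum]
  exact sum_le_sum h

lemma AlmostEq.symm (h : AlmostEq θ x y) : AlmostEq θ y x := ⟨h.2, h.1⟩

lemma AlmostEq.const_mul (h : AlmostEq θ x y) (hc : 0 ≤ c) : AlmostEq θ (c * x) (c * y) :=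
  ⟨h.1.const_mul hc, h.2.const_mul hc⟩

lemma AlmostEq.trans (h : AlmostEq θ x y) (h' : AlmostEq θ' y z) (hx : 0 ≤ x) (hz : 0 ≤ z)
    (hθ : θ ∈ Set.Icc 0 1) (hθ' : θ' ∈ Set.Icc 0 1) : AlmostEq (θ + θ') x z :=
  ⟨h.1.trans h'.1 hx hθ.1 hθ'.1 hθ'.2, add_comm θ' θ ▸ h'.2.trans h.2 hz hθ'.1 hθ.1 hθ.2⟩

lemma almostEq_sub_mul {M : ℝ} (hc : 0 ≤ c) (hcM : c ≤ θ * M) (hθ : θ ∈ Set.Icc 0 1)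
    (hM : 0 ≤ M) (hx : 0 ≤ x) : AlmostEq θ ((M - c) * x) (M * x) := by
  constructor
  · refine AlmostLE.mono_left (.of_le le_rfl hθ.1 (by positivity)) ?_ hθ.2
    exact mul_le_mul_of_nonneg_right (by linarith) hx
  · rw [AlmostLE, ← mul_assoc]
    exact mul_le_mul_of_nonneg_right (by linarith) hx

lemma AlmostEq.sum (h : ∀ i ∈ s, AlmostEq θ (f i) (g i)) :
    AlmostEq θ (∑ i ∈ s, f i) (∑ i ∈ s, g i) :=
  ⟨.sum fun i hi => (h i hi).1, .sum fun i hi => (h i hi).2⟩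

lemma AlmostEq.abs_sub_le (h : AlmostEq θ x y) (hθ : 0 ≤ θ) (hθ2 : θ ≤ 1 / 2) (hy : 0 ≤ y) :
    |x - y| ≤ 2 * θ * y := by
  obtain ⟨h₁, h₂⟩ := h
  unfold AlmostLE at h₁ h₂
  rw [abs_le]
  constructor <;> nlinarith

end RelativeErrors

/-! ### Realizations of a degree sequence -/

/-- The degree sequence that is `1` at `v` and `0` elsewhere, written `δ v`. -/
abbrev unitAt {V : Type*} [DecidableEq V] (v : V) : V → ℤ := Pi.single v 1

local notation "δ" => unitAt

section Realizations

variable {V : Type*} [DecidableEq V]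

/-- The degree of `v` in the graph with edge set `E`. -/
def edgeDegree (E : Finset (Sym2 V)) (v : V) : ℕ := #{e ∈ E | v ∈ e}

lemma edgeDegree_insert {E : Finset (Sym2 V)} {s t : V} (hst : s ≠ t) (hE : s(s, t) ∉ E) (v : V) :
    (edgeDegree (insert s(s, t) E) v : ℤ) = edgeDegree E v + δ s v + δ t v := by
  unfold edgeDegree
  rw [filter_insert]
  by_cases hs : v = s
  · subst hs
    simp [hE, hst]
  · by_cases ht : v = t
    · subst ht
      simp [hE, hs]
    · simp [hs, ht]

variable [Fintype V]

lemma card_neighbors (E : Finset (Sym2 V)) (v : V) : #{u | s(v, u) ∈ E} = edgeDegree E v := by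
  refine card_bij (fun u _ => s(v, u)) (by simp) (fun _ _ _ _ => Sym2.congr_right.1) ?_
  intro e he
  obtain ⟨heE, u, rfl⟩ := mem_filter.1 he
  exact ⟨u, by simpa using heE, rfl⟩

/-- The simple graphs (as edge sets) with degree sequence `d`. Degrees are integers so that
they can be decremented freely; a sequence with a negative entry has no realization. -/
def realizations (d : V → ℤ) : Finset (Finset (Sym2 V)) :=
  {E | (∀ e ∈ E, ¬ e.IsDiag) ∧ ∀ v, (edgeDegree E v : ℤ) = d v}

/-- The number of realizations of `d`. -/
def numRealizations (d : V → ℤ) : ℝ := #(realizations d)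

open Classical in
/-- The number of realizations of `d` with the property `Q`. -/
def numWith (d : V → ℤ) (Q : Finset (Sym2 V) → Prop) : ℝ := #{E ∈ realizations d | Q E}

variable {d : V → ℤ} {E : Finset (Sym2 V)} {P Q : Finset (Sym2 V) → Prop}

lemma mem_realizations :
    E ∈ realizations d ↔ (∀ e ∈ E, ¬ e.IsDiag) ∧ ∀ v, (edgeDegree E v : ℤ) = d v := by
  simp [realizations]

lemma numRealizations_nonneg (d : V → ℤ) : 0 ≤ numRealizations d := Nat.cast_nonneg _

lemma numWith_nonneg (d : V → ℤ) (Q : Finset (Sym2 V) → Prop) : 0 ≤ numWith d Q :=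
  Nat.cast_nonneg _

lemma numWith_mono (h : ∀ E ∈ realizations d, P E → Q E) : numWith d P ≤ numWith d Q := by
  classical
  refine Nat.cast_le.2 (card_le_card fun E hE => ?_)
  simp only [mem_filter] at hE ⊢
  exact ⟨hE.1, h E hE.1 hE.2⟩

lemma numWith_congr (h : ∀ E ∈ realizations d, (P E ↔ Q E)) : numWith d P = numWith d Q :=
  le_antisymm (numWith_mono fun E hE => (h E hE).1) (numWith_mono fun E hE => (h E hE).2)

lemma numWith_eq_zero (h : ∀ E ∈ realizations d, ¬ Q E) : numWith d Q = 0 := by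
  classical
  simp [numWith, filter_false_of_mem h]

lemma numWith_eq_numRealizations (h : ∀ E ∈ realizations d, Q E) :
    numWith d Q = numRealizations d := by
  classical
  rw [numWith, numRealizations, filter_true_of_mem h]

open Classical in
lemma numWith_eq_sum (d : V → ℤ) (Q : Finset (Sym2 V) → Prop) :
    numWith d Q = ∑ E ∈ realizations d, if Q E then 1 else 0 := by
  simp [numWith]

lemma numWith_and_add_and_not (d : V → ℤ) (P Q : Finset (Sym2 V) → Prop) :
    numWith d (fun E => P E ∧ Q E) + numWith d (fun E => P E ∧ ¬ Q E) = numWith d P := by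
  classical
  simp_rw [numWith_eq_sum, ← sum_add_distrib]
  refine sum_congr rfl fun E _ => ?_
  by_cases hP : P E <;> by_cases hQ : Q E <;> simp [hP, hQ]

lemma numRealizations_eq_zero_of_neg {v : V} (hv : d v < 0) : numRealizations d = 0 := by
  have hempty : realizations d = ∅ := by
    refine eq_empty_of_forall_notMem fun E hE => ?_
    have := (mem_realizations.1 hE).2 v
    omega
  simp [numRealizations, hempty]

lemma degree_mul_numRealizations_eq_zero {v : V} (hv : d v ≤ 0) : d v * numRealizations d = 0 := by
  rcases hv.eq_or_lt with h | h
  · simp [h]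
  · rw [numRealizations_eq_zero_of_neg h, mul_zero]

lemma degree_mul_numRealizations_nonneg (d : V → ℤ) (v : V) : 0 ≤ d v * numRealizations d := by
  rcases le_total (d v) 0 with h | h
  · exact (degree_mul_numRealizations_eq_zero h).ge
  · exact mul_nonneg (by exact_mod_cast h) (numRealizations_nonneg d)

open Classical in
lemma sum_numWith {ι : Type*} [Fintype ι] (d : V → ℤ) (Q : ι → Finset (Sym2 V) → Prop) :
    ∑ i, numWith d (Q i) = ∑ E ∈ realizations d, (#{i | Q i E} : ℝ) := by
  simp_rw [numWith_eq_sum]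
  rw [sum_comm]
  simp

open Classical in
lemma numWith_mul_le_sum {ι : Type*} [Fintype ι] {R : ι → Finset (Sym2 V) → Prop} {c : ℝ}
    (h : ∀ E ∈ realizations d, P E → c ≤ #{i | R i E}) :
    numWith d P * c ≤ ∑ i, numWith d (fun E => P E ∧ R i E) := by
  rw [sum_numWith, numWith_eq_sum, sum_mul]
  refine sum_le_sum fun E hE => ?_
  by_cases hP : P E
  · simpa [hP] using h E hE hP
  · simp [hP]

open Classical in
lemma sum_numWith_le {ι : Type*} [Fintype ι] {R : ι → Finset (Sym2 V) → Prop} {c : ℝ}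
    (h : ∀ E ∈ realizations d, #{i | R i E} ≤ c) :
    ∑ i, numWith d (R i) ≤ c * numRealizations d := by
  rw [sum_numWith]
  exact (sum_le_card_nsmul _ _ c h).trans_eq (by rw [numRealizations, nsmul_eq_mul, mul_comm])

lemma card_neighbors_of_mem (hE : E ∈ realizations d) (v : V) :
    (#{u | s(v, u) ∈ E} : ℤ) = d v := by
  rw [card_neighbors, (mem_realizations.1 hE).2 v]

lemma ne_of_mem_edges (hE : E ∈ realizations d) {u v : V} (h : s(u, v) ∈ E) : u ≠ v := by
  simpa using (mem_realizations.1 hE).1 _ h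

lemma notMem_edges_of_degree_nonpos (hE : E ∈ realizations d) {v : V} (hv : d v ≤ 0) (u : V) :
    s(v, u) ∉ E := by
  intro h
  have hcard := card_neighbors_of_mem hE v
  have hpos : 0 < #{u | s(v, u) ∈ E} := card_pos.2 ⟨u, by simpa using h⟩
  omega

lemma eq_of_mem_edges_of_degree_eq_one (hE : E ∈ realizations d) {v : V} (hv : d v = 1) {u w : V}
    (hu : s(v, u) ∈ E) (hw : s(v, w) ∈ E) : u = w := by
  have hcard := card_neighbors_of_mem hE v
  have hle : #{u | s(v, u) ∈ E} ≤ 1 := by omega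
  exact card_le_one.1 hle u (by simpa using hu) w (by simpa using hw)

lemma sum_numWith_neighbor (d : V → ℤ) (v : V) :
    ∑ u, numWith d (fun E => s(v, u) ∈ E) = d v * numRealizations d := by
  classical
  rw [sum_numWith, sum_congr rfl (g := fun _ => (d v : ℝ)), sum_const, nsmul_eq_mul, mul_comm,
    numRealizations]
  intro E hE
  rw [← card_neighbors_of_mem hE v, Int.cast_natCast]
  congr!

open Classical in
lemma sum_numWith_leaf {l : V} (hl : d l = 1) (Q : Finset (Sym2 V) → Prop) :
    ∑ x, numWith d (fun E => s(l, x) ∈ E ∧ Q E) = numWith d Q := by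
  rw [sum_numWith, numWith_eq_sum]
  refine sum_congr rfl fun E hE => ?_
  have hcard := card_neighbors_of_mem hE l
  rw [hl] at hcard
  by_cases hQ : Q E
  · simpa [hQ] using mod_cast hcard
  · simp [hQ]

lemma erase_mem_realizations {s t : V} (hE : E ∈ realizations d) (hst : s(s, t) ∈ E) :
    E.erase s(s, t) ∈ realizations (d - δ s - δ t) := by
  refine mem_realizations.2
    ⟨fun e he => (mem_realizations.1 hE).1 e (mem_of_mem_erase he), fun v => ?_⟩
  have hdeg := edgeDegree_insert (E := E.erase s(s, t)) (ne_of_mem_edges hE hst) (by simp) v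
  rw [insert_erase hst, (mem_realizations.1 hE).2 v] at hdeg
  simp only [Pi.sub_apply]
  omega

lemma insert_mem_realizations {s t : V} (hE : E ∈ realizations (d - δ s - δ t)) (hne : s ≠ t)
    (hst : s(s, t) ∉ E) : insert s(s, t) E ∈ realizations d := by
  refine mem_realizations.2 ⟨?_, fun v => ?_⟩
  · simp only [mem_insert, forall_eq_or_imp, Sym2.mk_isDiag_iff]
    exact ⟨hne, (mem_realizations.1 hE).1⟩
  · rw [edgeDegree_insert hne hst, (mem_realizations.1 hE).2 v]
    simp only [Pi.sub_apply]
    ring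

lemma numWith_edge (d : V → ℤ) {s t : V} (hst : s ≠ t) (Q : Finset (Sym2 V) → Prop) :
    numWith d (fun E => s(s, t) ∈ E ∧ Q E) =
      numWith (d - δ s - δ t) (fun E => s(s, t) ∉ E ∧ Q (insert s(s, t) E)) := by
  classical
  unfold numWith
  norm_cast
  refine card_nbij' (fun E => E.erase s(s, t)) (fun E => insert s(s, t) E) ?_ ?_ ?_ ?_ <;>
    intro E hE <;> simp only [coe_filter, Set.mem_ofPred_eq] at hE ⊢ <;>
    obtain ⟨hE, hmem, hQ⟩ := hE
  · exact ⟨erase_mem_realizations hE hmem, notMem_erase _ _, by rwa [insert_erase hmem]⟩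
  · exact ⟨insert_mem_realizations hE hst hmem, mem_insert_self _ _, hQ⟩
  · exact insert_erase hmem
  · exact erase_insert hmem

lemma numWith_leaf_edge {l u : V} (hlu : l ≠ u) (hl : d l = 1) (Q : Finset (Sym2 V) → Prop) :
    numWith d (fun E => s(l, u) ∈ E ∧ Q E) =
      numWith (d - δ l - δ u) (fun E => Q (insert s(l, u) E)) := by
  rw [numWith_edge _ hlu]
  refine numWith_congr fun E hE => and_iff_right ?_
  exact notMem_edges_of_degree_nonpos hE (by simp [hl, hlu]) u

lemma numWith_leaf_edge_eq_numRealizations {l u : V} (hlu : l ≠ u) (hl : d l = 1) :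
    numWith d (fun E => s(l, u) ∈ E) = numRealizations (d - δ l - δ u) := by
  have h := numWith_leaf_edge hlu hl (fun _ => True)
  simp only [and_true] at h
  rw [h, numWith_eq_numRealizations fun _ _ => trivial]

lemma numRealizations_add_leaf {l : V} (hl : d l = 0) :
    numRealizations (d + δ l) = ∑ u, numRealizations (d - δ u) := by
  have hleaf : (d + δ l) l = 1 := by simp [hl]
  have hsum := sum_numWith_neighbor (d + δ l) l
  rw [hleaf, Int.cast_one, one_mul] at hsum
  rw [← hsum]
  refine sum_congr rfl fun u _ => ?_
  rcases eq_or_ne l u with rfl | hlu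
  · rw [numWith_eq_zero fun E hE h => ne_of_mem_edges hE h rfl,
      numRealizations_eq_zero_of_neg (v := l) (by simp [hl])]
  · rw [numWith_leaf_edge_eq_numRealizations hlu hleaf, add_sub_cancel_right]

end Realizations

/-! ### Splitting off a leaf -/

section Splitting

variable {V : Type*} [DecidableEq V] {d : V → ℤ} {a l : V}

/-- The degree sequence obtained from `d` by moving one unit of degree from `a` to `l`. It is used
with `d l = 0`, so that `l` becomes a leaf. -/
def split (d : V → ℤ) (a l : V) : V → ℤ := d - δ a + δ l

lemma split_leaf (hal : a ≠ l) (hl : d l = 0) : split d a l l = 1 := by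
  simp [split, hl, hal.symm]

lemma split_source (hal : a ≠ l) : split d a l a = d a - 1 := by
  simp [split, hal]

lemma split_of_ne {u : V} (hua : u ≠ a) (hul : u ≠ l) : split d a l u = d u := by
  simp [split, hua, hul]

lemma sum_unitAt [Fintype V] (v : V) : ∑ w, (δ v w : ℝ) = 1 := by
  simp [unitAt, Pi.single_apply]

lemma sum_sub_unitAt [Fintype V] (d : V → ℤ) (v : V) :
    ∑ w, ((d - δ v) w : ℝ) = ∑ w, (d w : ℝ) - 1 := by
  simp only [Pi.sub_apply, Int.cast_sub, sum_sub_distrib, sum_unitAt]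

lemma sum_split [Fintype V] (d : V → ℤ) (a l : V) :
    ∑ w, (split d a l w : ℝ) = ∑ w, (d w : ℝ) := by
  simp only [split, Pi.add_apply, Int.cast_add, sum_add_distrib, sum_sub_unitAt, sum_unitAt]
  ring

variable [Fintype V]

/-- The number of pairs `(E, u)` where `E` realizes `d` and `u` is a neighbour of `l` in the closed
neighbourhood of `a`. -/
def closeLeafCount (d : V → ℤ) (l a : V) : ℝ :=
  ∑ u, numWith d (fun E => s(l, u) ∈ E ∧ (u = a ∨ s(a, u) ∈ E))

lemma closeLeafCount_nonneg (d : V → ℤ) (l a : V) : 0 ≤ closeLeafCount d l a :=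
  sum_nonneg fun _ _ => numWith_nonneg _ _

lemma numWith_split_not_close (hal : a ≠ l) (hl : d l = 0) (u : V) :
    numWith (split d a l) (fun E => s(l, u) ∈ E ∧ ¬ (u = a ∨ s(a, u) ∈ E)) =
      numWith d (fun E => s(a, u) ∈ E) := by
  rcases eq_or_ne u a with rfl | hua
  · rw [numWith_eq_zero (by simp), numWith_eq_zero fun E hE h => ne_of_mem_edges hE h rfl]
  rcases eq_or_ne u l with rfl | hul
  · rw [numWith_eq_zero fun E hE h => ne_of_mem_edges hE h.1 rfl, numWith_eq_zero]
    intro E hE h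
    exact notMem_edges_of_degree_nonpos hE hl.le a (Sym2.eq_swap ▸ h)
  have hedge := numWith_edge d hua.symm (fun _ => True)
  simp only [and_true] at hedge
  have hrest : split d a l - δ l - δ u = d - δ a - δ u := by unfold split; abel
  rw [hedge, numWith_leaf_edge hul.symm (split_leaf hal hl), hrest]
  refine numWith_congr fun E _ => ?_
  simp only [mem_insert, Sym2.eq_iff]
  grind

/-- Merging the leaf `l` of a realization of `split d a l` into `a` yields a simple graph with a
distinguished edge at `a`, unless the neighbour of `l` is too close to `a`. -/
lemma degree_mul_numRealizations_add_closeLeafCount (hal : a ≠ l) (hl : d l = 0) :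
    d a * numRealizations d + closeLeafCount (split d a l) l a =
      numRealizations (split d a l) := by
  have hleaf := sum_numWith_neighbor (split d a l) l
  rw [split_leaf hal hl, Int.cast_one, one_mul] at hleaf
  rw [← hleaf, ← sum_numWith_neighbor, closeLeafCount, ← sum_add_distrib]
  refine sum_congr rfl fun u _ => ?_
  rw [← numWith_split_not_close hal hl, add_comm, numWith_and_add_and_not]

lemma degree_mul_numRealizations_le_split (hal : a ≠ l) (hl : d l = 0) :
    d a * numRealizations d ≤ numRealizations (split d a l) := by
  linarith [degree_mul_numRealizations_add_closeLeafCount hal hl,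
    closeLeafCount_nonneg (split d a l) l a]

end Splitting

/-! ### Switchings -/

/-- The degrees `d` are at most `Δ` and sum to at least `S`. -/
structure DegreeBounds {V : Type*} [Fintype V] (d : V → ℤ) (Δ : ℤ) (S : ℝ) : Prop where
  le : ∀ v, d v ≤ Δ
  le_sum : S ≤ ∑ v, (d v : ℝ)

/-- The range of parameters in which a switching argument with maximum degree `Δ` and degree sum at
least `S` yields a relative error `θ`. -/
structure SwitchingRegime (Δ : ℤ) (S θ : ℝ) : Prop where
  one_le : 1 ≤ Δ
  pos : 0 < θ
  lt_one : θ < 1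
  two_mul_sq_le : 2 * (Δ : ℝ) ^ 2 ≤ θ * (S - 2 * (Δ : ℝ) ^ 2)

lemma SwitchingRegime.two_mul_sq_lt {Δ : ℤ} {S θ : ℝ} (h : SwitchingRegime Δ S θ) :
    2 * (Δ : ℝ) ^ 2 < S := by
  have hΔ : (1 : ℝ) ≤ Δ := by exact_mod_cast h.one_le
  exact sub_pos.1 (pos_of_mul_pos_right (by nlinarith [h.two_mul_sq_le]) h.pos.le)

section Switching

variable {V : Type*} [Fintype V] {d : V → ℤ} {Δ : ℤ} {S S' θ : ℝ}

lemma DegreeBounds.mono (h : DegreeBounds d Δ S) (hS : S' ≤ S) : DegreeBounds d Δ S' :=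
  ⟨h.le, hS.trans h.le_sum⟩

variable [DecidableEq V] {a l : V}

lemma DegreeBounds.sub_unitAt (h : DegreeBounds d Δ S) (v : V) :
    DegreeBounds (d - δ v) Δ (S - 1) where
  le w := by
    have := h.le w
    simp only [Pi.sub_apply, Pi.single_apply]
    split_ifs <;> omega
  le_sum := by
    rw [sum_sub_unitAt]
    linarith [h.le_sum]

lemma DegreeBounds.split (h : DegreeBounds d Δ S) (hΔ : 1 ≤ Δ) (hal : a ≠ l) (hl : d l = 0) :
    DegreeBounds (split d a l) Δ S where
  le w := by
    rcases eq_or_ne w l with rfl | hwl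
    · rwa [split_leaf hal hl]
    rcases eq_or_ne w a with rfl | hwa
    · have := h.le w
      rw [split_source hal]
      omega
    · exact (split_of_ne hwa hwl).trans_le (h.le w)
  le_sum := (sum_split d a l).symm ▸ h.le_sum

/-- The switching `{lu, xy} → {lx, uy}`. -/
lemma numWith_switch_le (hal : a ≠ l) (hl : d l = 1) (u x y : V) :
    numWith d (fun E => (s(l, u) ∈ E ∧ (u = a ∨ s(a, u) ∈ E)) ∧
        (¬ (y = u ∨ s(u, y) ∈ E) ∧ s(y, x) ∈ E)) ≤
      numWith d (fun E => s(l, x) ∈ E ∧ ((u = a ∨ s(a, u) ∈ E) ∧ s(u, y) ∈ E)) := by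
  by_cases hdistinct : u ≠ l ∧ x ≠ l ∧ y ≠ l ∧ u ≠ y ∧ y ≠ x
  · obtain ⟨hul, hxl, hyl, huy, hyx⟩ := hdistinct
    calc _ = numWith d (fun E => s(l, u) ∈ E ∧
              (s(y, x) ∈ E ∧ ((u = a ∨ s(a, u) ∈ E) ∧ s(u, y) ∉ E))) :=
          numWith_congr fun E _ => by have := huy.symm; tauto
      _ ≤ numWith (d - δ l - δ u) (fun E => s(y, x) ∈ E ∧
            ((u = a ∨ s(a, u) ∈ E) ∧ s(u, y) ∉ E)) := by
          rw [numWith_leaf_edge hul.symm hl]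
          refine numWith_mono fun E _ => ?_
          simp only [mem_insert, Sym2.eq_iff]
          grind
      _ ≤ numWith (d - δ l - δ x) (fun E => s(u, y) ∈ E ∧ (u = a ∨ s(a, u) ∈ E)) := by
          have hrest : d - δ l - δ u - δ y - δ x = d - δ l - δ x - δ u - δ y := by abel
          rw [numWith_edge _ hyx, numWith_edge _ huy, hrest]
          refine numWith_mono fun E _ => ?_
          simp only [mem_insert, Sym2.eq_iff]
          grind
      _ ≤ _ := by
          rw [numWith_leaf_edge hxl.symm hl]
          refine numWith_mono fun E _ => ?_
          simp only [mem_insert]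
          tauto
  · rw [numWith_eq_zero]
    · exact numWith_nonneg _ _
    rintro E hE ⟨⟨hlu, -⟩, hfar, hyx⟩
    push Not at hfar
    refine hdistinct ⟨(ne_of_mem_edges hE hlu).symm, ?_, ?_, hfar.1.symm, ne_of_mem_edges hE hyx⟩
    · rintro rfl
      exact hfar.1 (eq_of_mem_edges_of_degree_eq_one hE hl (Sym2.eq_swap ▸ hyx) hlu)
    · rintro rfl
      exact hfar.2 (Sym2.eq_swap ▸ hlu)

lemma card_edges_from {E : Finset (Sym2 V)} (hE : E ∈ realizations d) (Q : V → Prop)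
    [DecidablePred Q] :
    (#{i : V × V | Q i.1 ∧ s(i.1, i.2) ∈ E} : ℝ) = ∑ y with Q y, (d y : ℝ) := by
  simp only [card_filter, ← card_neighbors_of_mem hE, Fintype.sum_prod_type, sum_filter]
  push_cast
  refine sum_congr rfl fun y _ => ?_
  by_cases hy : Q y <;> simp [hy]

lemma sum_degree_closedNbhd_le {E : Finset (Sym2 V)} (hE : E ∈ realizations d) (hΔ : 1 ≤ Δ)
    (hd : ∀ v, d v ≤ Δ) (a : V) :
    ∑ u with (u = a ∨ s(a, u) ∈ E), (d u : ℝ) ≤ 2 * (Δ : ℝ) ^ 2 := by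
  have hcard : (#{u | u = a ∨ s(a, u) ∈ E} : ℤ) ≤ 1 + Δ := by
    rw [filter_or]
    refine (Nat.cast_le.2 (card_union_le _ _)).trans ?_
    push_cast
    rw [card_neighbors_of_mem hE]
    simp [filter_eq', hd a]
  have hsum := sum_le_card_nsmul {u | u = a ∨ s(a, u) ∈ E} d Δ fun u _ => hd u
  rw [nsmul_eq_mul] at hsum
  have : ∑ u with (u = a ∨ s(a, u) ∈ E), d u ≤ 2 * Δ ^ 2 := by nlinarith
  exact_mod_cast this

lemma closeLeafCount_mul_le (hΔ : 1 ≤ Δ) (hd : DegreeBounds d Δ S) (hal : a ≠ l) (hl : d l = 1) :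
    closeLeafCount d l a * (S - 2 * (Δ : ℝ) ^ 2) ≤ 2 * (Δ : ℝ) ^ 2 * numRealizations d := by
  classical
  have hforward : ∀ E ∈ realizations d, ∀ u,
      S - 2 * (Δ : ℝ) ^ 2 ≤ #{i : V × V | ¬ (i.1 = u ∨ s(u, i.1) ∈ E) ∧ s(i.1, i.2) ∈ E} := by
    intro E hE u
    rw [card_edges_from hE (fun y => ¬ (y = u ∨ s(u, y) ∈ E))]
    linarith [hd.le_sum, sum_degree_closedNbhd_le hE hΔ hd.le u,
      sum_filter_add_sum_filter_not univ (fun y => y = u ∨ s(u, y) ∈ E) fun y => (d y : ℝ)]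
  calc closeLeafCount d l a * (S - 2 * (Δ : ℝ) ^ 2)
      ≤ ∑ u, ∑ i : V × V, numWith d (fun E => (s(l, u) ∈ E ∧ (u = a ∨ s(a, u) ∈ E)) ∧
          (¬ (i.1 = u ∨ s(u, i.1) ∈ E) ∧ s(i.1, i.2) ∈ E)) := by
        rw [closeLeafCount, sum_mul]
        refine sum_le_sum fun u _ => numWith_mul_le_sum fun E hE _ => ?_
        convert hforward E hE u
    _ ≤ ∑ u, ∑ i : V × V, numWith d (fun E => s(l, i.2) ∈ E ∧
          ((u = a ∨ s(a, u) ∈ E) ∧ s(u, i.1) ∈ E)) :=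
        sum_le_sum fun u _ => sum_le_sum fun i _ => numWith_switch_le hal hl u i.2 i.1
    _ = ∑ i : V × V, numWith d (fun E => (i.1 = a ∨ s(a, i.1) ∈ E) ∧ s(i.1, i.2) ∈ E) := by
        simp only [Fintype.sum_prod_type, sum_numWith_leaf hl]
    _ ≤ 2 * (Δ : ℝ) ^ 2 * numRealizations d := by
        refine sum_numWith_le fun E hE => ?_
        convert (card_edges_from hE fun u => u = a ∨ s(a, u) ∈ E).trans_le
          (sum_degree_closedNbhd_le hE hΔ hd.le a)

lemma closeLeafCount_le (hreg : SwitchingRegime Δ S θ) (hd : DegreeBounds d Δ S) (hal : a ≠ l)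
    (hl : d l = 1) : closeLeafCount d l a ≤ θ * numRealizations d := by
  refine le_of_mul_le_mul_right ?_ (sub_pos.2 hreg.two_mul_sq_lt)
  calc closeLeafCount d l a * (S - 2 * (Δ : ℝ) ^ 2)
      ≤ 2 * (Δ : ℝ) ^ 2 * numRealizations d := closeLeafCount_mul_le hreg.one_le hd hal hl
    _ ≤ θ * (S - 2 * (Δ : ℝ) ^ 2) * numRealizations d :=
        mul_le_mul_of_nonneg_right hreg.two_mul_sq_le (numRealizations_nonneg d)
    _ = θ * numRealizations d * (S - 2 * (Δ : ℝ) ^ 2) := by ring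

lemma numRealizations_split_almostLE (hreg : SwitchingRegime Δ S θ) (hd : DegreeBounds d Δ S)
    (hal : a ≠ l) (hl : d l = 0) :
    AlmostLE θ (numRealizations (split d a l)) (d a * numRealizations d) := by
  have hclose := closeLeafCount_le hreg (hd.split hreg.one_le hal hl) hal (split_leaf hal hl)
  unfold AlmostLE
  linarith [degree_mul_numRealizations_add_closeLeafCount hal hl]

lemma numRealizations_sub_unitAt_almostLE (hreg : SwitchingRegime Δ S θ)
    (hd : DegreeBounds d Δ (S + 1)) (hl : d l = 0) (u v : V) :
    AlmostLE θ (d u * numRealizations (d - δ v)) (d v * numRealizations (d - δ u)) := by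
  have hzero : numRealizations (d - δ l) = 0 :=
    numRealizations_eq_zero_of_neg (v := l) (by simp [hl])
  rcases eq_or_ne u l with rfl | hul
  · simp [AlmostLE, hl, hzero]
  rcases eq_or_ne v l with rfl | hvl
  · simp [AlmostLE, hl, hzero]
  rcases eq_or_ne u v with rfl | huv
  · refine .of_le le_rfl hreg.pos.le ?_
    rcases lt_or_ge (d u) 1 with hu | hu
    · rw [numRealizations_eq_zero_of_neg (v := u) (by simpa using hu), mul_zero]
    · have : (0 : ℝ) ≤ d u := by exact_mod_cast (by omega : 0 ≤ d u)
      exact mul_nonneg this (numRealizations_nonneg _)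
  have hle := degree_mul_numRealizations_le_split (d := d - δ v) hul (by simp [hl, hvl.symm])
  have hge := numRealizations_split_almostLE (d := d - δ u) hreg
    ((hd.sub_unitAt u).mono (by linarith)) hvl (by simp [hl, hul.symm])
  have hsplit : split (d - δ v) u l = split (d - δ u) v l := by unfold split; abel
  have hu : (d - δ v) u = d u := by simp [huv]
  have hv : (d - δ u) v = d v := by simp [huv.symm]
  rw [hu, hsplit] at hle
  rw [hv] at hge
  exact hge.mono_left hle hreg.lt_one.le

lemma numWith_leaf_edge_almostEq (hreg : SwitchingRegime Δ S θ) (hd : DegreeBounds d Δ (S + 2))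
    {u : V} (hlu : l ≠ u) (hl : d l = 1) :
    AlmostEq θ (d u * numRealizations d)
      ((∑ v, (d v : ℝ) - 1) * numWith d (fun E => s(l, u) ∈ E)) := by
  have hc : (d - δ l) l = 0 := by simp [hl]
  have hbounds : DegreeBounds (d - δ l) Δ (S + 1) := (hd.sub_unitAt l).mono (by linarith)
  have hleaf := numRealizations_add_leaf hc
  have hu : (d - δ l) u = d u := by simp [hlu.symm]
  rw [sub_add_cancel] at hleaf
  rw [numWith_leaf_edge_eq_numRealizations hlu hl, ← sum_sub_unitAt d l, hleaf, ← hu, mul_sum,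
    sum_mul]
  exact ⟨.sum fun v _ => numRealizations_sub_unitAt_almostLE hreg hbounds hc u v,
    .sum fun v _ => numRealizations_sub_unitAt_almostLE hreg hbounds hc v u⟩

end Switching

/-! ### Second-order expansion of the number of close leaves -/

section SecondOrder

variable {V : Type*} [Fintype V] [DecidableEq V] {d : V → ℤ} {a l u z : V} {Δ : ℤ} {S θ M : ℝ}

/-- The number of realizations of `d` in which `u` is adjacent to both `a` and `l`. -/
def cherryCount (d : V → ℤ) (l a u : V) : ℝ := numWith d (fun E => s(a, u) ∈ E ∧ s(l, u) ∈ E)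

/-- The number of realizations of `d` in which `u` is adjacent to `z`, `a` and `l`. -/
def clawCount (d : V → ℤ) (l z a u : V) : ℝ :=
  numWith d (fun E => s(z, u) ∈ E ∧ (s(a, u) ∈ E ∧ s(l, u) ∈ E))

lemma sum_degree_pairs_nonneg {V : Type*} (d : V → ℤ) (s : Finset V) :
    0 ≤ ∑ v ∈ s, (d v : ℝ) * (d v - 1) :=
  sum_nonneg fun v _ => by
    exact_mod_cast (show 0 ≤ d v * (d v - 1) by rcases le_or_gt (d v) 0 with h | h <;> nlinarith)

lemma cherryCount_eq_zero (h : u = l ∨ u = a) : cherryCount d l a u = 0 := by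
  refine numWith_eq_zero fun E hE ⟨hau, hlu⟩ => ?_
  exact h.elim (ne_of_mem_edges hE hlu).symm (ne_of_mem_edges hE hau).symm

lemma clawCount_eq_zero (h : u = l ∨ u = z ∨ u = a) : clawCount d l z a u = 0 := by
  refine numWith_eq_zero fun E hE ⟨hzu, hau, hlu⟩ => ?_
  rcases h with h | h | h
  exacts [ne_of_mem_edges hE hlu h.symm, ne_of_mem_edges hE hzu h.symm,
    ne_of_mem_edges hE hau h.symm]

lemma closeLeafCount_eq_add_sum_cherryCount (d : V → ℤ) (l a : V) :
    closeLeafCount d l a =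
      numWith d (fun E => s(l, a) ∈ E) + ∑ u ∈ univ.erase a, cherryCount d l a u := by
  rw [closeLeafCount, ← add_sum_erase _ _ (mem_univ a)]
  congr 1
  · exact numWith_congr (by simp)
  · refine sum_congr rfl fun u hu => numWith_congr fun E _ => ?_
    simp only [ne_of_mem_erase hu, false_or, and_comm]

/-- Splitting a second leaf `z` off `a` turns the edge `au` into the edge `zu`. -/
lemma cherryCount_add_clawCount (haz : a ≠ z) (hlz : l ≠ z) (hal : a ≠ l) (hz : d z = 0)
    (hua : u ≠ a) :
    cherryCount d l a u + clawCount (split d a z) l z a u = cherryCount (split d a z) l z u := by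
  rcases eq_or_ne u l with hul | hul
  · rw [cherryCount_eq_zero (.inl hul), cherryCount_eq_zero (.inl hul),
      clawCount_eq_zero (.inl hul), add_zero]
  rcases eq_or_ne u z with rfl | huz
  · rw [cherryCount_eq_zero (.inr rfl), clawCount_eq_zero (.inr (.inl rfl)), add_zero]
    refine numWith_eq_zero fun E hE h => ?_
    exact notMem_edges_of_degree_nonpos hE hz.le l (Sym2.eq_swap ▸ h.2)
  have hclaw : clawCount (split d a z) l z a u =
      numWith (split d a z) (fun E => (s(z, u) ∈ E ∧ s(l, u) ∈ E) ∧ s(a, u) ∈ E) :=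
    numWith_congr fun E _ => by tauto
  have hcherry : cherryCount d l a u =
      numWith (split d a z) (fun E => (s(z, u) ∈ E ∧ s(l, u) ∈ E) ∧ s(a, u) ∉ E) := by
    have hrest : split d a z - δ z - δ u = d - δ a - δ u := by unfold split; abel
    simp only [and_assoc]
    rw [numWith_leaf_edge huz.symm (split_leaf haz hz), hrest, cherryCount,
      numWith_edge d hua.symm]
    refine numWith_congr fun E _ => ?_
    simp only [mem_insert, Sym2.eq_iff]
    grind
  rw [hclaw, hcherry, add_comm, numWith_and_add_and_not, cherryCount]

lemma closeLeafCount_eq_add_sub (haz : a ≠ z) (hlz : l ≠ z) (hal : a ≠ l) (hz : d z = 0) :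
    closeLeafCount d l a = numWith d (fun E => s(l, a) ∈ E) +
      ∑ u ∈ univ.erase a, cherryCount (split d a z) l z u -
      ∑ u ∈ univ.erase a, clawCount (split d a z) l z a u := by
  rw [closeLeafCount_eq_add_sum_cherryCount, add_sub_assoc, ← sum_sub_distrib]
  congr 1
  refine sum_congr rfl fun u hu => eq_sub_of_add_eq ?_
  exact cherryCount_add_clawCount haz hlz hal hz (ne_of_mem_erase hu)

lemma cherryCount_eq_numWith (hlz : l ≠ z) (huz : u ≠ z) (hz : d z = 1) :
    cherryCount d l z u = numWith (d - δ z - δ u) (fun E => s(l, u) ∈ E) := by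
  rw [cherryCount, numWith_leaf_edge huz.symm hz]
  refine numWith_congr fun E _ => ?_
  simp only [mem_insert, Sym2.eq_iff]
  grind

lemma clawCount_eq_cherryCount (hlz : l ≠ z) (haz : a ≠ z) (huz : u ≠ z)
    (hz : d z = 1) : clawCount d l z a u = cherryCount (d - δ z - δ u) l a u := by
  rw [clawCount, numWith_leaf_edge huz.symm hz, cherryCount]
  refine numWith_congr fun E _ => ?_
  simp only [mem_insert, Sym2.eq_iff]
  grind

lemma cherryCount_almostEq (hreg : SwitchingRegime Δ S θ) (hd : DegreeBounds d Δ (S + 4))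
    (hlz : l ≠ z) (hl : d l = 1) (hz : d z = 1) (u : V) :
    AlmostEq (2 * θ) (d u * (d u - 1) * numRealizations d)
      ((∑ v, (d v : ℝ) - 1) * (∑ v, (d v : ℝ) - 3) * cherryCount d l z u) := by
  by_cases hu : u = l ∨ u = z
  · have : d u = 1 := by rcases hu with rfl | rfl <;> assumption
    simp [cherryCount_eq_zero hu, this, AlmostEq, AlmostLE]
  push Not at hu
  rcases le_or_gt (d u) 0 with hdu | hdu
  · have hcherry : cherryCount d l z u = 0 := numWith_eq_zero fun E hE h =>
      notMem_edges_of_degree_nonpos hE hdu l (Sym2.eq_swap ▸ h.2)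
    rw [mul_right_comm, degree_mul_numRealizations_eq_zero hdu, hcherry]
    simp [AlmostEq, AlmostLE]
  have hS : 2 < S := by
    have : (1 : ℝ) ≤ Δ := by exact_mod_cast hreg.one_le
    nlinarith [hreg.two_mul_sq_lt]
  have hM := hd.le_sum
  have hθ : θ ∈ Set.Icc 0 1 := ⟨hreg.pos.le, hreg.lt_one.le⟩
  have hdu' : (1 : ℝ) ≤ d u := by exact_mod_cast hdu
  have hfirst := numWith_leaf_edge_almostEq hreg (hd.mono (by linarith)) hu.2.symm hz
  have hsecond := numWith_leaf_edge_almostEq (d := d - δ z - δ u) (l := l) hreg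
    (((hd.sub_unitAt z).sub_unitAt u).mono (by linarith)) hu.1.symm (by simp [hl, hlz, hu.1.symm])
  have hdeg : (d - δ z - δ u) u = d u - 1 := by simp [hu.2]
  rw [numWith_leaf_edge_eq_numRealizations hu.2.symm hz] at hfirst
  rw [sum_sub_unitAt, sum_sub_unitAt, hdeg, ← cherryCount_eq_numWith hlz hu.2 hz] at hsecond
  have hfirst' := hfirst.const_mul (c := d u - 1) (by linarith)
  have hsecond' := hsecond.const_mul (c := ∑ v, (d v : ℝ) - 1) (by linarith)
  have hx : (0 : ℝ) ≤ (d u - 1) * (d u * numRealizations d) :=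
    mul_nonneg (by linarith) (degree_mul_numRealizations_nonneg d u)
  have hz : 0 ≤ (∑ v, (d v : ℝ) - 1) * ((∑ v, (d v : ℝ) - 1 - 1 - 1) * cherryCount d l z u) :=
    mul_nonneg (by linarith) (mul_nonneg (by linarith) (numWith_nonneg _ _))
  push_cast at hsecond'
  rw [mul_left_comm] at hsecond'
  convert hfirst'.trans hsecond' hx hz hθ hθ using 1 <;> ring

lemma degree_pairs_mul_numRealizations_le (hd : ∀ v, d v ≤ Δ) (u : V) :
    (d u : ℝ) * (d u - 1) * numRealizations d ≤ (Δ : ℝ) ^ 2 * numRealizations d := by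
  rcases lt_or_ge (d u) 0 with hu | hu
  · rw [numRealizations_eq_zero_of_neg hu, mul_zero, mul_zero]
  · have hpairs : d u * (d u - 1) ≤ Δ ^ 2 := by nlinarith [hd u]
    exact mul_le_mul_of_nonneg_right (by exact_mod_cast hpairs) (numRealizations_nonneg d)

lemma clawCount_almostLE (hreg : SwitchingRegime Δ S θ) (hθ : 3 * θ ≤ 1)
    (hd : DegreeBounds d Δ (S + 6))
    (hlz : l ≠ z) (haz : a ≠ z) (hal : a ≠ l) (hl : d l = 1) (hz : d z = 1) (u : V) :
    AlmostLE (3 * θ) ((∑ v, (d v : ℝ) - 3) * (∑ v, (d v : ℝ) - 5) * clawCount d l z a u)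
      ((Δ : ℝ) ^ 3 * numRealizations (d - δ z - δ u)) := by
  have hΔ : (1 : ℝ) ≤ Δ := by exact_mod_cast hreg.one_le
  by_cases hu : u = l ∨ u = z ∨ u = a
  · rw [clawCount_eq_zero hu, AlmostLE, mul_zero, mul_zero]
    exact mul_nonneg (by positivity) (numRealizations_nonneg _)
  push Not at hu
  obtain ⟨hul, huz, hua⟩ := hu
  have hS : 2 < S := by nlinarith [hreg.two_mul_sq_lt]
  have hM := hd.le_sum
  rw [clawCount_eq_cherryCount hlz haz huz hz]
  have he : DegreeBounds (d - δ z - δ u) Δ (S + 4) :=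
    ((hd.sub_unitAt z).sub_unitAt u).mono (by linarith)
  have hsum : ∑ v, ((d - δ z - δ u) v : ℝ) = ∑ v, (d v : ℝ) - 2 := by
    rw [sum_sub_unitAt, sum_sub_unitAt]
    ring
  have hez : (d - δ z - δ u) z = 0 := by simp [hz, huz.symm]
  have hel : (d - δ z - δ u) l = 1 := by simp [hl, hlz, hul.symm]
  generalize d - δ z - δ u = e at *
  have hD := he.split hreg.one_le haz hez
  have hcherry := (cherryCount_almostEq hreg hD hlz ((split_of_ne hal.symm hlz).trans hel)
    (split_leaf haz hez) u).2
  rw [sum_split, hsum] at hcherry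
  have hmerge : AlmostLE θ (numRealizations (split e a z)) (Δ * numRealizations e) :=
    (numRealizations_split_almostLE hreg (he.mono (by linarith)) haz hez).mono_right
      (mul_le_mul_of_nonneg_right (by exact_mod_cast he.le a) (numRealizations_nonneg e))
  have hle : cherryCount e l a u ≤ cherryCount (split e a z) l z u := by
    rw [← cherryCount_add_clawCount haz hlz hal hez hua]
    exact le_add_of_nonneg_right (numWith_nonneg _ _)
  have hfactor : 0 ≤ (∑ v, (d v : ℝ) - 2 - 1) * (∑ v, (d v : ℝ) - 2 - 3) :=
    mul_nonneg (by linarith) (by linarith)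
  have hchain := (hcherry.mono_right (degree_pairs_mul_numRealizations_le hD.le u)).trans
    (hmerge.const_mul (c := (Δ : ℝ) ^ 2) (by positivity))
    (mul_nonneg hfactor (numWith_nonneg _ _)) (by linarith [hreg.pos]) hreg.pos.le hreg.lt_one.le
  convert hchain.mono_left (mul_le_mul_of_nonneg_left hle hfactor) (by linarith) using 1 <;> ring

lemma degree_mul_numRealizations_almostEq_split (hreg : SwitchingRegime Δ S θ)
    (hd : DegreeBounds d Δ S) (haz : a ≠ z) (hz : d z = 0) :
    AlmostEq θ (d a * numRealizations d) (numRealizations (split d a z)) :=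
  ⟨.of_le (degree_mul_numRealizations_le_split haz hz) hreg.pos.le
    (degree_mul_numRealizations_nonneg d a), numRealizations_split_almostLE hreg hd haz hz⟩

lemma sum_cherryCount_almostEq (hreg : SwitchingRegime Δ S θ) (hθ : 2 * θ ≤ 1)
    (hd : DegreeBounds d Δ (S + 4)) (haz : a ≠ z) (hlz : l ≠ z) (hal : a ≠ l) (hl : d l = 1)
    (hz : d z = 0) :
    AlmostEq (3 * θ)
      ((∑ u ∈ univ.erase a, (d u : ℝ) * (d u - 1)) * (d a * numRealizations d))
      ((∑ v, (d v : ℝ) - 1) * (∑ v, (d v : ℝ) - 3) *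
        ∑ u ∈ univ.erase a, cherryCount (split d a z) l z u) := by
  have hS : 2 < S := by
    have : (1 : ℝ) ≤ Δ := by exact_mod_cast hreg.one_le
    nlinarith [hreg.two_mul_sq_lt]
  have hM := hd.le_sum
  have hpairs_nonneg := sum_degree_pairs_nonneg d (univ.erase a)
  have hsplit := (degree_mul_numRealizations_almostEq_split hreg (hd.mono (by linarith)) haz
    hz).const_mul hpairs_nonneg
  have hcherry := AlmostEq.sum (s := univ.erase a) fun u _ => cherryCount_almostEq hreg
    (hd.split hreg.one_le haz hz) hlz ((split_of_ne hal.symm hlz).trans hl) (split_leaf haz hz) u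
  have hpairs : ∑ u ∈ univ.erase a, (split d a z u : ℝ) * (split d a z u - 1) =
      ∑ u ∈ univ.erase a, (d u : ℝ) * (d u - 1) := by
    refine sum_congr rfl fun u hu => ?_
    rcases eq_or_ne u z with rfl | huz
    · simp [split_leaf haz hz, hz]
    · rw [split_of_ne (ne_of_mem_erase hu) huz]
  rw [← sum_mul, ← mul_sum, hpairs, sum_split] at hcherry
  have hθ0 := hreg.pos.le
  convert hsplit.trans hcherry (mul_nonneg hpairs_nonneg (degree_mul_numRealizations_nonneg d a))
    (mul_nonneg (mul_nonneg (by linarith) (by linarith)) (sum_nonneg fun _ _ => numWith_nonneg _ _))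
    ⟨hθ0, hreg.lt_one.le⟩ ⟨by linarith, hθ⟩ using 1
  ring

lemma sum_clawCount_almostLE (hreg : SwitchingRegime Δ S θ) (hθ : 3 * θ ≤ 1)
    (hd : DegreeBounds d Δ (S + 6)) (haz : a ≠ z) (hlz : l ≠ z) (hal : a ≠ l) (hl : d l = 1)
    (hz : d z = 0) :
    AlmostLE (4 * θ)
      ((∑ v, (d v : ℝ) - 3) * (∑ v, (d v : ℝ) - 5) *
        ∑ u ∈ univ.erase a, clawCount (split d a z) l z a u)
      ((Δ : ℝ) ^ 3 * (d a * numRealizations d)) := by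
  have hΔ : (1 : ℝ) ≤ Δ := by exact_mod_cast hreg.one_le
  have hS : 2 < S := by nlinarith [hreg.two_mul_sq_lt]
  have hM := hd.le_sum
  have hclaw := AlmostLE.sum (s := univ.erase a) fun u _ => clawCount_almostLE hreg hθ
    (hd.split hreg.one_le haz hz) hlz haz hal ((split_of_ne hal.symm hlz).trans hl)
    (split_leaf haz hz) u
  rw [← mul_sum, ← mul_sum, sum_split] at hclaw
  have hneighbor : ∑ u ∈ univ.erase a, numRealizations (split d a z - δ z - δ u) ≤
      numRealizations (split d a z) := by
    have hleaf := numRealizations_add_leaf (d := split d a z - δ z) (l := z)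
      (by simp [split_leaf haz hz])
    rw [sub_add_cancel] at hleaf
    rw [hleaf]
    exact sum_le_sum_of_subset_of_nonneg (erase_subset _ _) fun _ _ _ => numRealizations_nonneg _
  have hsplit := (numRealizations_split_almostLE hreg (hd.mono (by linarith)) haz hz).const_mul
    (c := (Δ : ℝ) ^ 3) (by positivity)
  convert (hclaw.mono_right (mul_le_mul_of_nonneg_left hneighbor (by positivity))).trans hsplit
    (mul_nonneg (mul_nonneg (by linarith) (by linarith)) (sum_nonneg fun _ _ => numWith_nonneg _ _))
    (by linarith [hreg.pos]) hreg.pos.le hreg.lt_one.le using 1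
  ring

end SecondOrder

section SparseDegrees

variable {V : Type*} [Fintype V] {d : V → ℤ} {Δ : ℤ} {M : ℝ}

/-- A degree sequence of maximum degree at most `Δ` and degree sum `M` large compared with
`Δ ^ 2`. -/
structure SparseDegrees (d : V → ℤ) (Δ : ℤ) (M : ℝ) : Prop where
  nonneg : ∀ v, 0 ≤ d v
  le : ∀ v, d v ≤ Δ
  one_le : 1 ≤ Δ
  sum_eq : ∑ v, (d v : ℝ) = M
  sq_le : 100 * (Δ : ℝ) ^ 2 ≤ M

namespace SparseDegrees

lemma one_le_cast (hd : SparseDegrees d Δ M) : (1 : ℝ) ≤ Δ := by exact_mod_cast hd.one_le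

lemma hundred_le (hd : SparseDegrees d Δ M) : 100 ≤ M := by
  nlinarith [hd.sq_le, hd.one_le_cast]

lemma ratio_mul (hd : SparseDegrees d Δ M) : (Δ : ℝ) ^ 2 / M * M = (Δ : ℝ) ^ 2 :=
  div_mul_cancel₀ _ (by linarith [hd.hundred_le])

lemma ratio_le (hd : SparseDegrees d Δ M) : (Δ : ℝ) ^ 2 / M ≤ 1 / 100 := by
  rw [div_le_iff₀ (by linarith [hd.hundred_le])]
  linarith [hd.sq_le]

lemma degreeBounds (hd : SparseDegrees d Δ M) : DegreeBounds d Δ M := ⟨hd.le, hd.sum_eq.ge⟩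

lemma switchingRegime (hd : SparseDegrees d Δ M) :
    SwitchingRegime Δ (M - 6) (4 * ((Δ : ℝ) ^ 2 / M)) where
  one_le := hd.one_le
  pos := by
    have := hd.one_le_cast
    have := hd.hundred_le
    positivity
  lt_one := by linarith [hd.ratio_le]
  two_mul_sq_le := by
    have := hd.one_le_cast
    nlinarith [hd.ratio_mul, hd.ratio_le]

lemma ratio_nonneg (hd : SparseDegrees d Δ M) : 0 ≤ (Δ : ℝ) ^ 2 / M :=
  div_nonneg (sq_nonneg _) (by linarith [hd.hundred_le])

lemma one_le_ratio_mul (hd : SparseDegrees d Δ M) : 1 ≤ (Δ : ℝ) ^ 2 / M * M := by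
  nlinarith [hd.ratio_mul, hd.one_le_cast]

lemma almostEq_sub_one_mul_sub_three_mul (hd : SparseDegrees d Δ M) {x : ℝ} (hx : 0 ≤ x) :
    AlmostEq (4 * ((Δ : ℝ) ^ 2 / M)) ((M - 1) * (M - 3) * x) (M ^ 2 * x) := by
  have hM := hd.hundred_le
  have ht := hd.ratio_nonneg
  have ht' := hd.ratio_le
  have hx₃ : 0 ≤ (M - 3) * x := mul_nonneg (by linarith) hx
  have hone := almostEq_sub_mul zero_le_one hd.one_le_ratio_mul ⟨ht, by linarith⟩
    (by linarith) hx₃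
  have hthree := (almostEq_sub_mul (M := M) (c := 3) (θ := 3 * ((Δ : ℝ) ^ 2 / M)) (by norm_num)
    (by linarith [hd.one_le_ratio_mul]) ⟨by linarith, by linarith⟩ (by linarith) hx).const_mul
    (c := M) (by linarith)
  convert hone.trans hthree (mul_nonneg (by linarith) hx₃) (by positivity) ⟨ht, by linarith⟩
    ⟨by linarith, by linarith⟩ using 1 <;> ring

lemma sum_degree_pairs_le (hd : SparseDegrees d Δ M) (s : Finset V) :
    ∑ v ∈ s, (d v : ℝ) * (d v - 1) ≤ Δ * M := by
  calc ∑ v ∈ s, (d v : ℝ) * (d v - 1) ≤ ∑ v ∈ s, Δ * (d v : ℝ) := by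
        refine sum_le_sum fun v _ => ?_
        have : d v * (d v - 1) ≤ Δ * d v := by nlinarith [hd.le v, hd.nonneg v]
        exact_mod_cast this
    _ ≤ ∑ v, Δ * (d v : ℝ) := by
        refine sum_le_sum_of_subset_of_nonneg (subset_univ s) fun v _ _ => ?_
        exact mul_nonneg (by linarith [hd.one_le_cast]) (by exact_mod_cast hd.nonneg v)
    _ = Δ * M := by rw [← mul_sum, hd.sum_eq]

variable [DecidableEq V] {a l z : V}

lemma abs_numWith_leaf_edge_sub_le (hd : SparseDegrees d Δ M) (hla : l ≠ a) (hl : d l = 1) :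
    |M ^ 2 * numWith d (fun E => s(l, a) ∈ E) - M * (d a * numRealizations d)| ≤
      10 * (Δ : ℝ) ^ 3 * (d a * numRealizations d) := by
  have hleaf := numWith_leaf_edge_almostEq hd.switchingRegime
    (hd.degreeBounds.mono (by linarith)) hla hl
  rw [hd.sum_eq] at hleaf
  have hN := degree_mul_numRealizations_nonneg d a
  have hC := numWith_nonneg d (fun E => s(l, a) ∈ E)
  have hM := hd.hundred_le
  have ht := hd.ratio_nonneg
  have ht' := hd.ratio_le
  have hround := almostEq_sub_mul zero_le_one hd.one_le_ratio_mul ⟨ht, by linarith⟩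
    (by linarith) hC
  have herror := (hleaf.trans hround hN (by positivity) ⟨by linarith, by linarith⟩
    ⟨ht, by linarith⟩).symm.abs_sub_le (by linarith) (by linarith) hN
  calc |M ^ 2 * numWith d (fun E => s(l, a) ∈ E) - M * (d a * numRealizations d)|
      = M * |M * numWith d (fun E => s(l, a) ∈ E) - d a * numRealizations d| := by
        rw [sq, mul_assoc, ← mul_sub, abs_mul, abs_of_nonneg (show 0 ≤ M by linarith)]
    _ ≤ M * (10 * ((Δ : ℝ) ^ 2 / M) * (d a * numRealizations d)) :=
        mul_le_mul_of_nonneg_left (by linarith) (by linarith)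
    _ = 10 * (Δ : ℝ) ^ 2 * (d a * numRealizations d) := by
        linear_combination 10 * (d a * numRealizations d) * hd.ratio_mul
    _ ≤ 10 * (Δ : ℝ) ^ 3 * (d a * numRealizations d) := by
        refine mul_le_mul_of_nonneg_right ?_ hN
        linarith [pow_le_pow_right₀ hd.one_le_cast (show 2 ≤ 3 by norm_num)]

lemma abs_sum_cherryCount_sub_le (hd : SparseDegrees d Δ M) (haz : a ≠ z) (hlz : l ≠ z)
    (hal : a ≠ l) (hl : d l = 1) (hz : d z = 0) :
    |M ^ 2 * ∑ u ∈ univ.erase a, cherryCount (split d a z) l z u -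
        (∑ u ∈ univ.erase a, (d u : ℝ) * (d u - 1)) * (d a * numRealizations d)| ≤
      32 * (Δ : ℝ) ^ 3 * (d a * numRealizations d) := by
  have hM := hd.hundred_le
  have ht := hd.ratio_nonneg
  have ht' := hd.ratio_le
  have hcherry := sum_cherryCount_almostEq hd.switchingRegime (by linarith)
    (hd.degreeBounds.mono (by linarith)) haz hlz hal hl hz
  rw [hd.sum_eq] at hcherry
  have hN := degree_mul_numRealizations_nonneg d a
  have hT := sum_degree_pairs_nonneg d (univ.erase a)
  have hC : 0 ≤ ∑ u ∈ univ.erase a, cherryCount (split d a z) l z u :=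
    sum_nonneg fun _ _ => numWith_nonneg _ _
  have herror := (hcherry.trans (hd.almostEq_sub_one_mul_sub_three_mul hC) (by positivity)
    (by positivity) ⟨by linarith, by linarith⟩ ⟨by linarith, by linarith⟩).symm.abs_sub_le
    (by linarith) (by linarith) (by positivity)
  have hTt : (Δ : ℝ) ^ 2 / M * (∑ u ∈ univ.erase a, (d u : ℝ) * (d u - 1)) ≤ (Δ : ℝ) ^ 3 := by
    linear_combination mul_le_mul_of_nonneg_left (hd.sum_degree_pairs_le (univ.erase a)) ht +
      Δ * hd.ratio_mul
  nlinarith [mul_le_mul_of_nonneg_right hTt hN]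

lemma sum_clawCount_le (hd : SparseDegrees d Δ M) (haz : a ≠ z) (hlz : l ≠ z) (hal : a ≠ l)
    (hl : d l = 1) (hz : d z = 0) :
    M ^ 2 * ∑ u ∈ univ.erase a, clawCount (split d a z) l z a u ≤
      2 * (Δ : ℝ) ^ 3 * (d a * numRealizations d) := by
  have hclaw := sum_clawCount_almostLE hd.switchingRegime (by linarith [hd.ratio_le])
    (hd.degreeBounds.mono (by linarith)) haz hlz hal hl hz
  rw [hd.sum_eq, AlmostLE] at hclaw
  have hM := hd.hundred_le
  have hC : 0 ≤ ∑ u ∈ univ.erase a, clawCount (split d a z) l z a u :=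
    sum_nonneg fun _ _ => numWith_nonneg _ _
  have hfactor : 3 / 4 * M ^ 2 ≤ (M - 3) * (M - 5) := by nlinarith
  have hratio : 4 / 5 ≤ 1 - 4 * (4 * ((Δ : ℝ) ^ 2 / M)) := by linarith [hd.ratio_le]
  have hcoeff := mul_le_mul hratio hfactor (by positivity) (by linarith)
  linear_combination 2 * hclaw + 2 * mul_le_mul_of_nonneg_right hcoeff hC +
    (1 / 5) * mul_nonneg (sq_nonneg M) hC

lemma abs_closeLeafCount_sub_le (hd : SparseDegrees d Δ M) (haz : a ≠ z) (hlz : l ≠ z)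
    (hal : a ≠ l) (hl : d l = 1) (hz : d z = 0) :
    |M ^ 2 * closeLeafCount d l a -
        (M + ∑ u ∈ univ.erase a, (d u : ℝ) * (d u - 1)) * (d a * numRealizations d)| ≤
      44 * (Δ : ℝ) ^ 3 * (d a * numRealizations d) := by
  have hleaf := abs_le.1 (hd.abs_numWith_leaf_edge_sub_le hal.symm hl)
  have hcherry := abs_le.1 (hd.abs_sum_cherryCount_sub_le haz hlz hal hl hz)
  have hclaw := hd.sum_clawCount_le haz hlz hal hl hz
  have hclaw_nonneg : 0 ≤ M ^ 2 * ∑ u ∈ univ.erase a, clawCount (split d a z) l z a u :=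
    mul_nonneg (sq_nonneg M) (sum_nonneg fun _ _ => numWith_nonneg _ _)
  rw [closeLeafCount_eq_add_sub haz hlz hal hz, abs_le]
  constructor <;> linarith

end SparseDegrees

end SparseDegrees

/-! ### Logarithmic errors -/

/-- `x` equals `y` up to a factor `exp r` with `|r| ≤ b`. -/
def ExpClose (b x y : ℝ) : Prop := ∃ r, |r| ≤ b ∧ x = y * Real.exp r

namespace ExpClose

variable {b b' x x' y y' z : ℝ}

lemma of_eq (h : x = y) : ExpClose 0 x y := ⟨0, by simp, by simp [h]⟩

lemma mono (h : ExpClose b x y) (hb : b ≤ b') : ExpClose b' x y :=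
  let ⟨r, hr, hxy⟩ := h
  ⟨r, hr.trans hb, hxy⟩

lemma symm (h : ExpClose b x y) : ExpClose b y x := by
  obtain ⟨r, hr, rfl⟩ := h
  exact ⟨-r, by rwa [abs_neg], by rw [mul_assoc, ← Real.exp_add, add_neg_cancel, Real.exp_zero,
    mul_one]⟩

lemma trans (h : ExpClose b x y) (h' : ExpClose b' y z) : ExpClose (b + b') x z := by
  obtain ⟨r, hr, rfl⟩ := h
  obtain ⟨r', hr', rfl⟩ := h'
  refine ⟨r + r', (abs_add_le r r').trans (add_le_add hr hr'), ?_⟩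
  rw [Real.exp_add]
  ring

lemma mul (h : ExpClose b x y) (h' : ExpClose b' x' y') :
    ExpClose (b + b') (x * x') (y * y') := by
  obtain ⟨r, hr, rfl⟩ := h
  obtain ⟨r', hr', rfl⟩ := h'
  refine ⟨r + r', (abs_add_le r r').trans (add_le_add hr hr'), ?_⟩
  rw [Real.exp_add]
  ring

lemma const_mul (h : ExpClose b x y) (c : ℝ) : ExpClose b (c * x) (c * y) := by
  simpa using (of_eq (rfl : c = c)).mul h

lemma exp (h : |x - y| ≤ b) : ExpClose b (Real.exp x) (Real.exp y) :=
  ⟨x - y, h, by rw [← Real.exp_add, add_sub_cancel]⟩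

lemma one_sub {p : ℝ} (h₀ : 0 ≤ p) (h : p ≤ 1 / 2) :
    ExpClose (2 * p ^ 2) (1 - p) (Real.exp (-p)) := by
  have hlog := Real.abs_log_sub_add_sum_range_le (x := p) (by rw [abs_of_nonneg h₀]; linarith) 1
  simp only [range_one, sum_singleton, zero_add, pow_one, Nat.cast_zero, div_one, Nat.reduceAdd,
    abs_of_nonneg h₀] at hlog
  have hquad : p ^ 2 / (1 - p) ≤ 2 * p ^ 2 := by
    rw [div_le_iff₀ (by linarith)]
    nlinarith [sq_nonneg p]
  refine ⟨p + Real.log (1 - p), hlog.trans hquad, ?_⟩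
  rw [← Real.exp_add, neg_add_cancel_left, Real.exp_log (by linarith)]

lemma prod {ι : Type*} {s : Finset ι} {f g β : ι → ℝ} (h : ∀ i ∈ s, ExpClose (β i) (f i) (g i)) :
    ExpClose (∑ i ∈ s, β i) (∏ i ∈ s, f i) (∏ i ∈ s, g i) := by
  classical
  induction s using Finset.induction_on with
  | empty => simpa using of_eq (rfl : (1 : ℝ) = 1)
  | insert i s hi ih =>
    rw [sum_insert hi, prod_insert hi, prod_insert hi]
    exact (h i (mem_insert_self i s)).mul (ih fun j hj => h j (mem_insert_of_mem hj))

lemma prod_one_sub {ι : Type*} {s : Finset ι} {p : ι → ℝ} (h₀ : ∀ i ∈ s, 0 ≤ p i)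
    (h : ∀ i ∈ s, p i ≤ 1 / 2) :
    ExpClose (∑ i ∈ s, 2 * p i ^ 2) (∏ i ∈ s, (1 - p i)) (Real.exp (-∑ i ∈ s, p i)) := by
  rw [← sum_neg_distrib, Real.exp_sum]
  exact prod fun i hi => one_sub (h₀ i hi) (h i hi)

end ExpClose

/-! ### Reduction to matchings -/

section Matchings

variable {V : Type*} [Fintype V] [DecidableEq V] {d : V → ℤ} {a l : V}

@[to_additive]
lemma prod_comp_split {α : Type*} [CommMonoid α] (f : ℤ → α) (hal : a ≠ l) (hl : d l = 0) :
    f (d a - 1) * f 1 * ∏ v, f (d v) = f (d a) * f 0 * ∏ v, f (split d a l v) := by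
  have hpair : ∀ e : V → ℤ,
      ∏ v, f (e v) = f (e a) * (f (e l) * ∏ v ∈ (univ.erase a).erase l, f (e v)) := by
    intro e
    rw [mul_prod_erase _ (fun v => f (e v)) (mem_erase.2 ⟨hal.symm, mem_univ l⟩),
      mul_prod_erase _ (fun v => f (e v)) (mem_univ a)]
  have hrest : ∏ v ∈ (univ.erase a).erase l, f (split d a l v) =
      ∏ v ∈ (univ.erase a).erase l, f (d v) := by
    refine prod_congr rfl fun v hv => ?_
    rw [split_of_ne (ne_of_mem_erase (mem_of_mem_erase hv)) (ne_of_mem_erase hv)]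
  rw [hpair d, hpair (split d a l), hrest, split_source hal, split_leaf hal hl, hl]
  simp only [mul_comm, mul_left_comm, mul_assoc]

/-- The number of splittings needed to turn `d` into the degree sequence of a matching. -/
def excess (d : V → ℤ) : ℕ := ∑ v, ((d v).toNat - 1)

lemma excess_split (hal : a ≠ l) (hl : d l = 0) (ha : 2 ≤ d a) :
    excess (split d a l) + 1 = excess d := by
  have := sum_comp_split (fun k : ℤ => k.toNat - 1) hal hl
  unfold excess
  omega

lemma card_zeros_split (hal : a ≠ l) (hl : d l = 0) (ha : 2 ≤ d a) :
    #{v | split d a l v = 0} + 1 = #{v | d v = 0} := by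
  have hcount := sum_comp_split (fun k : ℤ => if k = 0 then 1 else 0) hal hl
  rw [if_neg (by omega), if_neg one_ne_zero, if_neg (by omega), if_pos rfl] at hcount
  simp only [card_filter]
  omega

/-- The number of ordered pairs of distinct half-edges at a common vertex. -/
def degreePairs (d : V → ℤ) : ℝ := ∑ v, (d v : ℝ) * (d v - 1)

lemma degreePairs_split (hal : a ≠ l) (hl : d l = 0) :
    degreePairs d = degreePairs (split d a l) + 2 * split d a l a := by
  have := sum_comp_split (fun k : ℤ => (k : ℝ) * (k - 1)) hal hl
  rw [degreePairs, degreePairs, split_source hal]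
  push_cast at this ⊢
  linarith

lemma prod_factorial_split (hal : a ≠ l) (hl : d l = 0) (ha : 1 ≤ d a) :
    ∏ v, ((d v).toNat.factorial : ℝ) = d a * ∏ v, ((split d a l v).toNat.factorial : ℝ) := by
  have hprod := prod_comp_split (fun k : ℤ => (k.toNat.factorial : ℝ)) hal hl
  obtain ⟨k, hk⟩ : ∃ k : ℕ, d a = k + 1 := ⟨(d a - 1).toNat, by omega⟩
  have hpred : (d a - 1).toNat = k := by omega
  have hself : (d a).toNat = k + 1 := by omega
  rw [hpred, hself, Nat.factorial_succ] at hprod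
  refine mul_left_cancel₀ (show (k.factorial : ℝ) ≠ 0 by positivity) ?_
  rw [hk]
  push_cast at hprod ⊢
  simp only [Nat.factorial_one, Nat.factorial_zero] at hprod
  linear_combination hprod

lemma doubleFactorial_two_mul_add_one (m : ℕ) :
    (((2 * (m + 1) - 1).doubleFactorial : ℕ) : ℝ) =
      (2 * m + 1) * ((2 * m - 1).doubleFactorial : ℕ) := by
  rcases m with _ | m
  · simp
  · rw [show 2 * (m + 1 + 1) - 1 = 2 * m + 1 + 2 by omega,
      show 2 * (m + 1) - 1 = 2 * m + 1 by omega, Nat.doubleFactorial_add_two]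
    push_cast
    ring

lemma numRealizations_zero : numRealizations (0 : V → ℤ) = 1 := by
  have hempty : realizations (0 : V → ℤ) = {∅} := by
    refine eq_singleton_iff_unique_mem.2 ⟨by simp [mem_realizations, edgeDegree], fun E hE => ?_⟩
    refine eq_empty_of_forall_notMem fun e => ?_
    induction e using Sym2.ind with
    | _ u v => exact notMem_edges_of_degree_nonpos hE le_rfl v
  rw [numRealizations, hempty, card_singleton, Nat.cast_one]

lemma sub_unitAt_mem_Icc {V : Type*} [DecidableEq V] {d : V → ℤ} {u : V}
    (h : ∀ v, d v ∈ Set.Icc 0 1) (hu : d u = 1) (v : V) : (d - δ u) v ∈ Set.Icc 0 1 := by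
  rcases eq_or_ne v u with rfl | hv
  · simp [hu]
  · simpa [hv] using h v

lemma exists_eq_one {V : Type*} [Fintype V] {d : V → ℤ} {m : ℕ} (h : ∀ v, d v ∈ Set.Icc 0 1)
    (hsum : ∑ v, (d v : ℝ) = 2 * (m + 1 : ℕ)) : ∃ l, d l = 1 := by
  by_contra! hne
  have hzero : ∀ v, d v = 0 := fun v => by
    have := h v
    have := hne v
    grind
  simp only [hzero, Int.cast_zero, sum_const_zero] at hsum
  push_cast at hsum
  linarith

lemma numRealizations_eq_doubleFactorial (m : ℕ) (h : ∀ v, d v ∈ Set.Icc 0 1)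
    (hsum : ∑ v, (d v : ℝ) = 2 * m) :
    numRealizations d = ((2 * m - 1).doubleFactorial : ℕ) := by
  induction m generalizing d with
  | zero =>
    have hsum' : ∑ v, d v = 0 := by exact_mod_cast hsum
    have hd : d = 0 := funext fun v =>
      (sum_eq_zero_iff_of_nonneg fun v _ => (h v).1).1 hsum' v (mem_univ v)
    simp [hd, numRealizations_zero]
  | succ m ih =>
    obtain ⟨l, hl⟩ := exists_eq_one h hsum
    have hrest := sub_unitAt_mem_Icc h hl
    have hterm : ∀ u, numRealizations (d - δ l - δ u) =
        (d - δ l) u * ((2 * m - 1).doubleFactorial : ℕ) := by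
      intro u
      rcases (hrest u).1.eq_or_lt with hu | hu
      · rw [numRealizations_eq_zero_of_neg (v := u) (by rw [Pi.sub_apply, ← hu]; simp), ← hu,
          Int.cast_zero, zero_mul]
      · have hu' : (d - δ l) u = 1 := le_antisymm (hrest u).2 hu
        rw [hu', Int.cast_one, one_mul]
        refine ih (sub_unitAt_mem_Icc hrest hu') ?_
        rw [sum_sub_unitAt, sum_sub_unitAt, hsum]
        push_cast
        ring
    have hleaf := numRealizations_add_leaf (d := d - δ l) (l := l) (by simp [hl])
    rw [sub_add_cancel] at hleaf
    rw [hleaf, sum_congr rfl fun u _ => hterm u, ← sum_mul, sum_sub_unitAt, hsum,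
      doubleFactorial_two_mul_add_one]
    push_cast
    ring

/-- Minus the logarithm of the asymptotic probability that a random pairing of the `M` half-edges
of `d` is a simple graph. -/
def simplicityExponent (d : V → ℤ) (M : ℝ) : ℝ :=
  degreePairs d / (2 * M) + (degreePairs d / (2 * M)) ^ 2

lemma simplicityExponent_split {M : ℝ} (hM : M ≠ 0) (hal : a ≠ l) (hl : d l = 0) :
    simplicityExponent d M = simplicityExponent (split d a l) M +
      (split d a l a / M + split d a l a * degreePairs (split d a l) / M ^ 2 +
        (split d a l a : ℝ) ^ 2 / M ^ 2) := by
  rw [simplicityExponent, simplicityExponent, degreePairs_split hal hl]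
  field_simp
  ring

lemma numRealizations_mul_eq_doubleFactorial {m : ℕ} (hsum : ∑ v, (d v : ℝ) = 2 * m)
    (h₀ : ∀ v, 0 ≤ d v) (hexcess : excess d = 0) :
    numRealizations d * (∏ v, ((d v).toNat.factorial : ℝ)) *
      Real.exp (simplicityExponent d (2 * m)) = ((2 * m - 1).doubleFactorial : ℕ) := by
  have h : ∀ v, d v = 0 ∨ d v = 1 := fun v => by
    have := sum_eq_zero_iff.1 hexcess v (mem_univ v)
    have := h₀ v
    omega
  have hpairs : degreePairs d = 0 := sum_eq_zero fun v _ => by rcases h v with h | h <;> simp [h]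
  have hfactorial : ∏ v, ((d v).toNat.factorial : ℝ) = 1 :=
    prod_eq_one fun v _ => by rcases h v with h | h <;> simp [h]
  rw [numRealizations_eq_doubleFactorial m (fun v => by grind) hsum, hfactorial,
    simplicityExponent, hpairs]
  simp

variable {Δ : ℤ} {M : ℝ} {z : V}

lemma sparseDegrees_split (hd : SparseDegrees d Δ M) (hal : a ≠ l) (hl : d l = 0) (ha : 1 ≤ d a) :
    SparseDegrees (split d a l) Δ M where
  nonneg v := by
    have := hd.nonneg v
    simp only [split, Pi.add_apply, Pi.sub_apply, Pi.single_apply]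
    grind
  le := (hd.degreeBounds.split hd.one_le hal hl).le
  one_le := hd.one_le
  sum_eq := (sum_split d a l).trans hd.sum_eq
  sq_le := hd.sq_le

namespace SparseDegrees

lemma abs_closeLeafCount_div_sub_le (hd : SparseDegrees d Δ M) (haz : a ≠ z) (hlz : l ≠ z)
    (hal : a ≠ l) (hl : d l = 1) (hz : d z = 0) (hN : 0 < numRealizations d) :
    |closeLeafCount d l a / numRealizations d -
        (d a / M + d a * degreePairs d / M ^ 2 + (d a : ℝ) ^ 2 / M ^ 2)| ≤
      45 * (Δ : ℝ) ^ 4 / M ^ 2 := by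
  have hM := hd.hundred_le
  have hclose := hd.abs_closeLeafCount_sub_le haz hlz hal hl hz
  have hpairs : ∑ u ∈ univ.erase a, (d u : ℝ) * (d u - 1) = degreePairs d - d a * (d a - 1) := by
    rw [degreePairs, ← add_sum_erase _ _ (mem_univ a), add_sub_cancel_left]
  have ha₀ : (0 : ℝ) ≤ d a := by exact_mod_cast hd.nonneg a
  have ha : (d a : ℝ) ≤ Δ := by exact_mod_cast hd.le a
  have hcube : (d a : ℝ) ^ 3 * numRealizations d ≤ (Δ : ℝ) ^ 4 * numRealizations d := by
    gcongr
    exact (pow_le_pow_left₀ ha₀ ha 3).trans (pow_le_pow_right₀ hd.one_le_cast (by norm_num))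
  have hcube₀ : 0 ≤ (d a : ℝ) ^ 3 * numRealizations d := by positivity
  have hquartic : 44 * (Δ : ℝ) ^ 3 * (d a * numRealizations d) ≤
      44 * (Δ : ℝ) ^ 4 * numRealizations d := by
    have := mul_le_mul_of_nonneg_left ha (show 0 ≤ 44 * (Δ : ℝ) ^ 3 * numRealizations d by
      have := hd.one_le_cast
      positivity)
    linarith
  have hscale : closeLeafCount d l a / numRealizations d -
        (d a / M + d a * degreePairs d / M ^ 2 + (d a : ℝ) ^ 2 / M ^ 2) =
      (M ^ 2 * closeLeafCount d l a - (M + (degreePairs d - d a * (d a - 1))) *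
        (d a * numRealizations d) - (d a : ℝ) ^ 3 * numRealizations d) /
        (M ^ 2 * numRealizations d) := by
    field_simp
    ring
  have hcancel : 45 * (Δ : ℝ) ^ 4 / M ^ 2 * (M ^ 2 * numRealizations d) =
      45 * (Δ : ℝ) ^ 4 * numRealizations d := by field_simp
  rw [hpairs, abs_le] at hclose
  rw [hscale, abs_div, abs_of_pos (show 0 < M ^ 2 * numRealizations d by positivity),
    div_le_iff₀ (by positivity), hcancel, abs_le]
  constructor <;> linarith

lemma expClose_numRealizations_sub_closeLeafCount (hd : SparseDegrees d Δ M) (haz : a ≠ z)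
    (hlz : l ≠ z) (hal : a ≠ l) (hl : d l = 1) (hz : d z = 0) :
    ExpClose (77 * (Δ : ℝ) ^ 4 / M ^ 2) (numRealizations d - closeLeafCount d l a)
      (numRealizations d *
        Real.exp (-(d a / M + d a * degreePairs d / M ^ 2 + (d a : ℝ) ^ 2 / M ^ 2))) := by
  have hclose := closeLeafCount_le hd.switchingRegime (hd.degreeBounds.mono (by linarith)) hal hl
  have hclose_nonneg := closeLeafCount_nonneg d l a
  have hbound : 0 ≤ 77 * (Δ : ℝ) ^ 4 / M ^ 2 := by positivity
  rcases (numRealizations_nonneg d).eq_or_lt with hN | hN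
  · rw [← hN, mul_zero] at hclose
    rw [← hN, le_antisymm hclose hclose_nonneg, zero_mul, sub_zero]
    exact (ExpClose.of_eq rfl).mono hbound
  have hp : closeLeafCount d l a / numRealizations d ≤ 4 * ((Δ : ℝ) ^ 2 / M) := by
    rwa [div_le_iff₀ hN]
  have hp₀ : 0 ≤ closeLeafCount d l a / numRealizations d := by positivity
  have hlog := ExpClose.one_sub hp₀ (by linarith [hd.ratio_le])
  have hexp := ExpClose.exp (b := 45 * (Δ : ℝ) ^ 4 / M ^ 2) (by
    rw [neg_sub_neg, abs_sub_comm]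
    exact hd.abs_closeLeafCount_div_sub_le haz hlz hal hl hz hN)
  have hsq : 2 * (closeLeafCount d l a / numRealizations d) ^ 2 ≤ 32 * (Δ : ℝ) ^ 4 / M ^ 2 := by
    calc 2 * (closeLeafCount d l a / numRealizations d) ^ 2
        ≤ 2 * (4 * ((Δ : ℝ) ^ 2 / M)) ^ 2 := by gcongr
      _ = 32 * (Δ : ℝ) ^ 4 / M ^ 2 := by ring
  have htotal := ((hlog.mono hsq).trans hexp).const_mul (numRealizations d)
  rw [mul_one_sub, mul_div_cancel₀ _ hN.ne'] at htotal
  exact htotal.mono (le_of_eq (by ring))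

lemma expClose_split (hd : SparseDegrees d Δ M) (hal : a ≠ l) (haz : a ≠ z) (hlz : l ≠ z)
    (hl : d l = 0) (hz : d z = 0) (ha : 1 ≤ d a) :
    ExpClose (77 * (Δ : ℝ) ^ 4 / M ^ 2)
      (numRealizations d * (∏ v, ((d v).toNat.factorial : ℝ)) * Real.exp (simplicityExponent d M))
      (numRealizations (split d a l) * (∏ v, ((split d a l v).toNat.factorial : ℝ)) *
        Real.exp (simplicityExponent (split d a l) M)) := by
  have hstep := expClose_numRealizations_sub_closeLeafCount (sparseDegrees_split hd hal hl ha)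
    haz hlz hal (split_leaf hal hl) ((split_of_ne haz.symm hlz.symm).trans hz)
  rw [← degree_mul_numRealizations_add_closeLeafCount hal hl, add_sub_cancel_right,
    degree_mul_numRealizations_add_closeLeafCount hal hl] at hstep
  convert hstep.const_mul ((∏ v, ((split d a l v).toNat.factorial : ℝ)) *
    Real.exp (simplicityExponent d M)) using 1
  · rw [prod_factorial_split hal hl ha]
    ring
  · rw [simplicityExponent_split (by linarith [hd.hundred_le]) hal hl, Real.exp_add, Real.exp_neg]
    field_simp

theorem expClose_doubleFactorial {m : ℕ} (hd : SparseDegrees d Δ (2 * m))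
    (hzeros : excess d < #{v | d v = 0}) :
    ExpClose (excess d * (77 * (Δ : ℝ) ^ 4 / (2 * m) ^ 2))
      (numRealizations d * (∏ v, ((d v).toNat.factorial : ℝ)) *
        Real.exp (simplicityExponent d (2 * m)))
      ((2 * m - 1).doubleFactorial : ℕ) := by
  induction hx : excess d generalizing d with
  | zero =>
    rw [Nat.cast_zero, zero_mul]
    exact .of_eq (numRealizations_mul_eq_doubleFactorial hd.sum_eq hd.nonneg hx)
  | succ x ih =>
    obtain ⟨a, -, ha⟩ := exists_ne_zero_of_sum_ne_zero (hx.trans_ne x.succ_ne_zero)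
    have ha : 2 ≤ d a := by omega
    obtain ⟨l, hl, z, hz, hlz⟩ := one_lt_card.1 (show 1 < #{v | d v = 0} by omega)
    simp only [mem_filter, mem_univ, true_and] at hl hz
    have hal : a ≠ l := by rintro rfl; omega
    have haz : a ≠ z := by rintro rfl; omega
    have hexcess := excess_split hal hl ha
    have hrest := ih (sparseDegrees_split hd hal hl (by omega))
      (by have := card_zeros_split hal hl ha; omega) (by omega)
    convert (hd.expClose_split hal haz hlz hl hz (by omega)).trans hrest using 1
    push_cast
    ring

end SparseDegrees

end Matchings

/-! ### Isolated vertices -/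

section IsolatedVertices

section

variable {V W : Type*} [DecidableEq V] [DecidableEq W]

lemma edgeDegree_map_inl (E : Finset (Sym2 V)) (v : V) :
    edgeDegree (E.map (Function.Embedding.inl (β := W)).sym2Map) (.inl v) = edgeDegree E v := by
  simp [edgeDegree, filter_map, Function.Embedding.sym2Map, Sym2.mem_map]

lemma edgeDegree_map_inr (E : Finset (Sym2 V)) (w : W) :
    edgeDegree (E.map (Function.Embedding.inl (β := W)).sym2Map) (.inr w) = 0 := by
  simp [edgeDegree, filter_map, Function.Embedding.sym2Map, Sym2.mem_map]

end

variable {V W : Type*} [Fintype V] [Fintype W] {d : V → ℤ}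

lemma sparseDegrees_sumElim_zero {Δ : ℤ} {M : ℝ} (hd : SparseDegrees d Δ M) :
    SparseDegrees (Sum.elim d (0 : W → ℤ)) Δ M where
  nonneg := by simpa using hd.nonneg
  le := by simpa using ⟨hd.le, fun _ => zero_le_one.trans hd.one_le⟩
  one_le := hd.one_le
  sum_eq := by simpa using hd.sum_eq
  sq_le := hd.sq_le

lemma excess_sumElim_zero (d : V → ℤ) : excess (Sum.elim d (0 : W → ℤ)) = excess d := by
  simp [excess]

lemma degreePairs_sumElim_zero (d : V → ℤ) :
    degreePairs (Sum.elim d (0 : W → ℤ)) = degreePairs d := by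
  simp [degreePairs]

lemma card_le_card_zeros_sumElim_zero (d : V → ℤ) :
    Fintype.card W ≤ #{x | Sum.elim d (0 : W → ℤ) x = 0} := by
  rw [← card_univ, ← card_map Function.Embedding.inr]
  exact card_le_card fun x hx => by
    obtain ⟨w, -, rfl⟩ := mem_map.1 hx
    simp

lemma SparseDegrees.excess_le {Δ : ℤ} {M : ℝ} (hd : SparseDegrees d Δ M) : excess d ≤ M := by
  rw [excess, Nat.cast_sum, ← hd.sum_eq]
  refine sum_le_sum fun v _ => ?_
  have := hd.nonneg v
  exact_mod_cast (by omega : (((d v).toNat - 1 : ℕ) : ℤ) ≤ d v)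

variable [DecidableEq V] [DecidableEq W]

lemma map_inl_mem_realizations {E : Finset (Sym2 V)} :
    E.map (Function.Embedding.inl (β := W)).sym2Map ∈ realizations (Sum.elim d 0) ↔
      E ∈ realizations d := by
  have hdiag : ∀ e : Sym2 V, (e.map (Sum.inl : V → V ⊕ W)).IsDiag ↔ e.IsDiag := fun e => by
    induction e using Sym2.ind with
    | _ u v => simp
  simp only [mem_realizations, Sum.forall, edgeDegree_map_inl, edgeDegree_map_inr]
  simp [Function.Embedding.sym2Map, hdiag]

lemma exists_map_inl_eq {E : Finset (Sym2 (V ⊕ W))} (hE : E ∈ realizations (Sum.elim d 0)) :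
    ∃ E₀ : Finset (Sym2 V), E₀.map Function.Embedding.inl.sym2Map = E := by
  have hsubset : E ⊆ univ.map Function.Embedding.inl.sym2Map := by
    intro e he
    induction e using Sym2.ind with
    | _ u v =>
      rcases u with u | w
      · rcases v with v | w
        · exact mem_map.2 ⟨s(u, v), mem_univ _, rfl⟩
        · rw [Sym2.eq_swap] at he
          exact absurd he (notMem_edges_of_degree_nonpos hE (by simp) _)
      · exact absurd he (notMem_edges_of_degree_nonpos hE (by simp) _)
  obtain ⟨E₀, -, hE₀⟩ := subset_map_iff.1 hsubset
  exact ⟨E₀, hE₀.symm⟩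

lemma numRealizations_sumElim_zero (d : V → ℤ) :
    numRealizations (Sum.elim d (0 : W → ℤ)) = numRealizations d := by
  rw [numRealizations, numRealizations, Nat.cast_inj]
  symm
  refine card_bij (fun E _ => E.map Function.Embedding.inl.sym2Map)
    (fun E hE => map_inl_mem_realizations.2 hE) (fun _ _ _ _ h => map_injective _ h) ?_
  intro E hE
  obtain ⟨E₀, rfl⟩ := exists_map_inl_eq hE
  exact ⟨E₀, map_inl_mem_realizations.1 hE, rfl⟩

-- Isolated vertices do not change the count, and they provide the room needed for the splittings.
theorem SparseDegrees.expClose_numRealizations {Δ : ℤ} {m : ℕ} (hd : SparseDegrees d Δ (2 * m)) :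
    ExpClose (77 * (Δ : ℝ) ^ 4 / (2 * m))
      (numRealizations d * (∏ v, ((d v).toNat.factorial : ℝ)) *
        Real.exp (simplicityExponent d (2 * m)))
      ((2 * m - 1).doubleFactorial : ℕ) := by
  have hpadded := (sparseDegrees_sumElim_zero (W := Fin (excess d + 1)) hd).expClose_doubleFactorial
    (by
      have := card_le_card_zeros_sumElim_zero (W := Fin (excess d + 1)) d
      rw [Fintype.card_fin] at this
      rw [excess_sumElim_zero]
      omega)
  rw [excess_sumElim_zero, numRealizations_sumElim_zero, simplicityExponent,
    degreePairs_sumElim_zero, ← simplicityExponent, Fintype.prod_sum_type] at hpadded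
  simp only [Sum.elim_inl, Sum.elim_inr, Pi.zero_apply, Int.toNat_zero, Nat.factorial_zero,
    Nat.cast_one, prod_const_one, mul_one] at hpadded
  have hm := hd.hundred_le
  refine hpadded.mono ?_
  calc (excess d : ℝ) * (77 * (Δ : ℝ) ^ 4 / (2 * m) ^ 2)
      ≤ 2 * m * (77 * (Δ : ℝ) ^ 4 / (2 * m) ^ 2) := by gcongr; exact hd.excess_le
    _ = 77 * (Δ : ℝ) ^ 4 / (2 * m) := by field_simp

end IsolatedVertices

/-! ### The two probabilities -/

section Probabilities

variable {n : ℕ}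

lemma gcount_eq_numRealizations (D : Fin n → ℕ) :
    (gcount n D : ℝ) = numRealizations fun i => (D i : ℤ) := by
  rw [gcount, numRealizations, realizations, Graphs, filter_filter]
  simp only [Nat.cast_inj]
  rfl

lemma sum_deg {E : Finset (Sym2 (Fin n))} (hE : E ∈ Graphs n) : ∑ i, deg E i = 2 * #E := by
  have hends : ∀ e ∈ E, #{i | i ∈ e} = 2 := by
    intro e he
    induction e using Sym2.ind with
    | _ u v =>
      have huv : u ≠ v := by simpa using (mem_filter.1 hE).2 _ he
      rw [← card_pair huv]
      congr 1
      ext i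
      simp
  simp only [deg, card_filter]
  rw [sum_comm]
  simp only [← card_filter]
  rw [sum_congr rfl hends, sum_const, smul_eq_mul, mul_comm]

lemma card_graphs_with_edges (n m : ℕ) : #{E ∈ Graphs n | #E = m} = (n.choose 2).choose m := by
  have hpowerset : {E ∈ Graphs n | #E = m} =
      powersetCard m {e : Sym2 (Fin n) | ¬ e.IsDiag} := by
    ext E
    simp only [Graphs, mem_filter, mem_univ, true_and, mem_powersetCard, subset_iff]
  rw [hpowerset, card_powersetCard, ← Fintype.card_subtype, Sym2.card_subtype_not_diag,
    Fintype.card_fin]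

lemma prG_eq_gcount_div {m : ℕ} {D : Fin n → ℕ} (hsum : ∑ i, D i = 2 * m) :
    prG n m D = gcount n D / ((n.choose 2).choose m : ℕ) := by
  have hedges : {E ∈ Graphs n | #E = m ∧ ∀ i, deg E i = D i} =
      {E ∈ Graphs n | ∀ i, deg E i = D i} := by
    refine filter_congr fun E hE => and_iff_right_of_imp fun hdeg => ?_
    have := sum_deg hE
    simp only [hdeg, hsum] at this
    omega
  rw [prG, gcount, hedges, card_graphs_with_edges]

lemma cast_choose_succ_mul (n k : ℕ) :
    (n.choose (k + 1) : ℝ) * (k + 1) = n.choose k * (n - k) := by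
  rcases le_or_gt k n with hk | hk
  · rw [← Nat.cast_sub hk]
    exact_mod_cast Nat.choose_succ_right_eq n k
  · rw [Nat.choose_eq_zero_of_lt hk, Nat.choose_eq_zero_of_lt (by omega)]
    simp

lemma doubleFactorial_mul_choose (N m : ℕ) :
    ((2 * m - 1).doubleFactorial : ℕ) * ((2 * N).choose (2 * m) : ℝ) =
      N.choose m * ∏ k ∈ range m, (2 * (N : ℝ) - (2 * k + 1)) := by
  induction m with
  | zero => simp
  | succ m ih =>
    have hodd := cast_choose_succ_mul (2 * N) (2 * m)
    have heven := cast_choose_succ_mul (2 * N) (2 * m + 1)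
    have hN := cast_choose_succ_mul N m
    push_cast at hodd heven
    rw [doubleFactorial_two_mul_add_one, prod_range_succ, show 2 * (m + 1) = 2 * m + 1 + 1 by ring]
    refine mul_right_cancel₀ (show (2 * m + 1 + 1 : ℝ) ≠ 0 by positivity) ?_
    linear_combination
      (2 * m + 1) * ((2 * m - 1).doubleFactorial : ℕ) * heven +
      ((2 * m - 1).doubleFactorial : ℕ) * (2 * N - (2 * m + 1)) * hodd +
      (2 * N - 2 * m) * (2 * N - (2 * m + 1)) * ih -
      2 * (∏ k ∈ range m, (2 * (N : ℝ) - (2 * k + 1))) * (2 * N - (2 * m + 1)) * hN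

theorem prG_mul_eq_prB_mul {m : ℕ} {D : Fin n → ℕ} (hsum : ∑ i, D i = 2 * m)
    (hm : m ≤ n.choose 2) :
    prG n m D * ((∏ i, ((n - 1).descFactorial (D i) : ℝ)) * ((2 * m - 1).doubleFactorial : ℕ)) =
      prB n m D * ((∏ k ∈ range m, ((n : ℝ) * (n - 1) - (2 * k + 1))) *
        (gcount n D * ∏ i, ((D i).factorial : ℝ))) := by
  have hpairs : n * (n - 1) = 2 * n.choose 2 := by
    rw [Nat.choose_two_right, Nat.mul_div_cancel' (Nat.even_mul_pred_self n).two_dvd]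
  have hpairs' : (n : ℝ) * (n - 1) = 2 * n.choose 2 := by
    rw [Nat.cast_choose_two]
    ring
  have hchoose := doubleFactorial_mul_choose (n.choose 2) m
  have hpos₁ : (0 : ℝ) < (n.choose 2).choose m := by exact_mod_cast Nat.choose_pos hm
  have hpos₂ : (0 : ℝ) < (2 * n.choose 2).choose (2 * m) := by
    exact_mod_cast Nat.choose_pos (by omega)
  rw [prG_eq_gcount_div hsum, prB, if_pos hsum, hpairs, hpairs']
  simp only [Nat.descFactorial_eq_factorial_mul_choose, Nat.cast_mul, prod_mul_distrib]
  field_simp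
  linear_combination (gcount n D * ∏ i, ((n - 1).choose (D i) : ℝ)) * hchoose

end Probabilities

/-! ### Falling products -/

section FallingProducts

lemma expClose_prod_sub {ι : Type*} {s : Finset ι} {c : ι → ℝ} {A C : ℝ} (hA : 0 < A)
    (hc : ∀ i ∈ s, c i ∈ Set.Icc 0 C) (hC : 2 * C ≤ A) :
    ExpClose (#s * (2 * (C / A) ^ 2)) (∏ i ∈ s, (A - c i))
      (A ^ #s * Real.exp (-((∑ i ∈ s, c i) / A))) := by
  have hratio : ∀ i ∈ s, c i / A ≤ C / A := fun i hi => by gcongr; exact (hc i hi).2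
  have hratio_nonneg : ∀ i ∈ s, 0 ≤ c i / A := fun i hi => div_nonneg (hc i hi).1 hA.le
  have hhalf : C / A ≤ 1 / 2 := by
    rw [div_le_iff₀ hA]
    linarith
  have hprod := (ExpClose.prod_one_sub hratio_nonneg
    fun i hi => (hratio i hi).trans hhalf).const_mul (A ^ #s)
  rw [← prod_const, ← prod_mul_distrib, ← sum_div, prod_const] at hprod
  simp only [mul_one_sub, mul_div_cancel₀ _ hA.ne'] at hprod
  refine hprod.mono ?_
  calc ∑ i ∈ s, 2 * (c i / A) ^ 2 ≤ ∑ _i ∈ s, 2 * (C / A) ^ 2 :=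
        sum_le_sum fun i hi => by
          have := pow_le_pow_left₀ (hratio_nonneg i hi) (hratio i hi) 2
          linarith
    _ = #s * (2 * (C / A) ^ 2) := by rw [sum_const, nsmul_eq_mul]

lemma sum_range_cast (k : ℕ) : ∑ j ∈ range k, (j : ℝ) = k * (k - 1) / 2 := by
  induction k with
  | zero => simp
  | succ k ih =>
    rw [sum_range_succ, ih]
    push_cast
    ring

lemma expClose_prod_sub_odd {A : ℝ} {m : ℕ} (hA : 0 < A) (hm : 4 * m ≤ A) :
    ExpClose (m * (2 * (2 * m / A) ^ 2)) (∏ k ∈ range m, (A - (2 * k + 1)))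
      (A ^ m * Real.exp (-((m : ℝ) ^ 2 / A))) := by
  have hodd : ∀ k ∈ range m, (2 * k + 1 : ℝ) ∈ Set.Icc (0 : ℝ) (2 * m) := fun k hk =>
    ⟨by positivity, by exact_mod_cast (by have := mem_range.1 hk; omega : 2 * k + 1 ≤ 2 * m)⟩
  have hsum : ∑ k ∈ range m, (2 * k + 1 : ℝ) = (m : ℝ) ^ 2 := by
    rw [sum_add_distrib, ← mul_sum, sum_range_cast, sum_const, card_range, nsmul_one]
    ring
  simpa only [card_range, hsum] using expClose_prod_sub hA hodd (by linarith)

variable {Δ w : ℕ}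

lemma expClose_descFactorial {k : ℕ} (hk : k ≤ Δ) (hΔ : 2 * Δ ≤ w) (hw : 0 < w) :
    ExpClose (k * (2 * ((Δ : ℝ) / w) ^ 2)) (w.descFactorial k)
      ((w : ℝ) ^ k * Real.exp (-((k : ℝ) * (k - 1) / (2 * w)))) := by
  have hfactors : (w.descFactorial k : ℝ) = ∏ j ∈ range k, ((w : ℝ) - j) := by
    rw [Nat.descFactorial_eq_prod_range, Nat.cast_prod]
    refine prod_congr rfl fun j hj => Nat.cast_sub ?_
    have := mem_range.1 hj
    omega
  have hj : ∀ j ∈ range k, (j : ℝ) ∈ Set.Icc (0 : ℝ) Δ := fun j hj =>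
    ⟨by positivity, by exact_mod_cast (mem_range.1 hj).le.trans hk⟩
  have hprod := expClose_prod_sub (Nat.cast_pos.2 hw) hj (by exact_mod_cast hΔ)
  rwa [← hfactors, card_range, sum_range_cast, div_div] at hprod

lemma expClose_prod_descFactorial {ι : Type*} [Fintype ι] {D : ι → ℕ} (hD : ∀ i, D i ≤ Δ)
    (hΔ : 2 * Δ ≤ w) (hw : 0 < w) :
    ExpClose ((∑ i, D i : ℕ) * (2 * ((Δ : ℝ) / w) ^ 2)) (∏ i, (w.descFactorial (D i) : ℝ))
      ((w : ℝ) ^ (∑ i, D i) * Real.exp (-((∑ i, (D i : ℝ) * (D i - 1)) / (2 * w)))) := by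
  convert ExpClose.prod fun i (_ : i ∈ univ) => expClose_descFactorial (hD i) hΔ hw using 1
  · rw [← sum_mul, Nat.cast_sum]
  · rw [prod_mul_distrib, prod_pow_eq_pow_sum, ← Real.exp_sum, sum_neg_distrib, sum_div]

lemma expClose_pow_sub_one {x : ℝ} (hx : 2 ≤ x) (m : ℕ) :
    ExpClose (m * (2 * (1 / x) ^ 2)) ((x - 1) ^ m) (x ^ m * Real.exp (-(m / x))) := by
  have hprod := expClose_prod_sub (s := range m) (c := fun _ => 1) (C := 1)
    (show 0 < x by linarith) (fun _ _ => ⟨zero_le_one, le_rfl⟩) (by linarith)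
  simpa using hprod

theorem expClose_prod_sub_odd_prod_descFactorial {n m : ℕ} {D : Fin n → ℕ}
    (hsum : ∑ i, D i = 2 * m) (hD : ∀ i, D i ≤ Δ) (hΔ : 2 * Δ ≤ n - 1) (hn : 2 ≤ n)
    (hm : 4 * (m : ℝ) ≤ n * (n - 1)) :
    ExpClose (m * (2 * (2 * m / ((n : ℝ) * (n - 1))) ^ 2) +
        (m * (2 * (1 / (n : ℝ)) ^ 2) + 2 * m * (2 * ((Δ : ℝ) / (n - 1)) ^ 2)))
      (∏ k ∈ range m, ((n : ℝ) * (n - 1) - (2 * k + 1)))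
      ((∏ i, ((n - 1).descFactorial (D i) : ℝ)) *
        Real.exp ((∑ i, (D i : ℝ) * (D i - 1)) / (2 * (n - 1)) + m / n -
          (m : ℝ) ^ 2 / (n * (n - 1)))) := by
  have hn' : (2 : ℝ) ≤ n := by exact_mod_cast hn
  have hpred : ((n - 1 : ℕ) : ℝ) = n - 1 := Nat.cast_pred (by omega)
  have hodd := expClose_prod_sub_odd (A := (n : ℝ) * (n - 1)) (by nlinarith) hm
  have hdesc := expClose_prod_descFactorial hD hΔ (by omega)
  have hpow := expClose_pow_sub_one hn' m
  rw [hsum, hpred, two_mul m, pow_add, Nat.cast_add, ← two_mul (m : ℝ)] at hdesc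
  set T := (∑ i, (D i : ℝ) * (D i - 1)) / (2 * ((n : ℝ) - 1))
  set e := Real.exp (T + m / n - (m : ℝ) ^ 2 / (n * (n - 1))) with he
  have hexp : Real.exp (-((m : ℝ) ^ 2 / (n * (n - 1)))) =
      e * Real.exp (-T) * Real.exp (-(m / n)) := by
    rw [he, ← Real.exp_add, ← Real.exp_add]
    congr 1
    ring
  have hmain : ((n : ℝ) * (n - 1)) ^ m * Real.exp (-((m : ℝ) ^ 2 / (n * (n - 1)))) =
      e * ((n : ℝ) - 1) ^ m * Real.exp (-T) * ((n : ℝ) ^ m * Real.exp (-(m / n))) := by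
    rw [hexp, mul_pow]
    ring
  have hsquare : e * ((n : ℝ) - 1) ^ m * Real.exp (-T) * ((n : ℝ) - 1) ^ m =
      e * (((n : ℝ) - 1) ^ m * ((n : ℝ) - 1) ^ m * Real.exp (-T)) := by ring
  have hpow' := hpow.symm.const_mul (e * ((n : ℝ) - 1) ^ m * Real.exp (-T))
  rw [hsquare] at hpow'
  rw [mul_comm _ e]
  exact hodd.trans (hmain ▸ hpow'.trans (hdesc.symm.const_mul e))

end FallingProducts

/-! ### Comparison of the two probabilities -/

section Comparison

lemma ExpClose.of_mul_eq_mul {b b' x y P Q F G Φ Ψ : ℝ} (h : x * (Q * F) = y * (P * G))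
    (hP : ExpClose b P (Q * Real.exp Ψ)) (hG : ExpClose b' (G * Real.exp Φ) F) (hQ : Q ≠ 0)
    (hF : F ≠ 0) : ExpClose (b + b') x (y * Real.exp (Ψ - Φ)) := by
  obtain ⟨r, hr, hPG⟩ := hP.mul hG
  have hexp : Real.exp (Ψ - Φ) * Real.exp Φ = Real.exp Ψ := by rw [← Real.exp_add, sub_add_cancel]
  refine ⟨r, hr, mul_right_cancel₀ (mul_ne_zero (mul_ne_zero hQ hF) (Real.exp_ne_zero Φ)) ?_⟩
  linear_combination Real.exp Φ * h + y * hPG - y * Q * F * Real.exp r * hexp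

variable {n m Δ : ℕ} {D : Fin n → ℕ}

theorem expClose_prG (hD : SparseDegrees (fun i => (D i : ℤ)) Δ (2 * m)) (hΔ : 2 * Δ ≤ n - 1)
    (hm : 4 * (m : ℝ) ≤ n * (n - 1)) :
    ExpClose (m * (2 * (2 * m / ((n : ℝ) * (n - 1))) ^ 2) +
        (m * (2 * (1 / (n : ℝ)) ^ 2) + 2 * m * (2 * ((Δ : ℝ) / (n - 1)) ^ 2)) +
        77 * (Δ : ℝ) ^ 4 / (2 * m))
      (prG n m D)
      (prB n m D * Real.exp ((∑ i, (D i : ℝ) * (D i - 1)) / (2 * (n - 1)) + m / n -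
        (m : ℝ) ^ 2 / (n * (n - 1)) - ((∑ i, (D i : ℝ) * (D i - 1)) / (2 * (2 * m)) +
          ((∑ i, (D i : ℝ) * (D i - 1)) / (2 * (2 * m))) ^ 2))) := by
  have hΔ₁ : 1 ≤ Δ := by exact_mod_cast hD.one_le
  have hle : ∀ i, D i ≤ Δ := fun i => by exact_mod_cast hD.le i
  have hsum : ∑ i, D i = 2 * m := by exact_mod_cast hD.sum_eq
  have hedges : m ≤ n.choose 2 := by
    have : (m : ℝ) ≤ n.choose 2 := by
      rw [Nat.cast_choose_two]
      linarith
    exact_mod_cast this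
  have hcount := hD.expClose_numRealizations
  have hfalling := expClose_prod_sub_odd_prod_descFactorial hsum hle hΔ (by omega) hm
  simp only [← gcount_eq_numRealizations, simplicityExponent, degreePairs, Int.toNat_natCast,
    Int.cast_natCast] at hcount
  have hdesc : ∏ i, ((n - 1).descFactorial (D i) : ℝ) ≠ 0 := prod_ne_zero_iff.2 fun i _ => by
    have := hle i
    exact_mod_cast (Nat.descFactorial_pos.2 (by omega)).ne'
  have hdouble : (((2 * m - 1).doubleFactorial : ℕ) : ℝ) ≠ 0 := by
    exact_mod_cast (Nat.doubleFactorial_pos _).ne'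
  exact .of_mul_eq_mul (prG_mul_eq_prB_mul hsum hedges) hfalling hcount hdesc hdouble

end Comparison

/-! ### Numerical estimates -/

/-- The sparse range: `n` vertices, average degree `d` and maximum degree at most `Δ`, with
`Δ ^ 6` small compared with `n d ^ 2`. -/
structure SparseRange (n d Δ : ℝ) : Prop where
  one_le : 1 ≤ Δ
  pos : 0 < d
  le : d ≤ Δ
  large : 1000 * Δ ^ 6 ≤ n * d ^ 2

namespace SparseRange

variable {n d Δ σ m : ℝ}

lemma quartic_le (h : SparseRange n d Δ) : 1000 * Δ ^ 4 ≤ n := by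
  obtain ⟨hΔ, hd, hle, hlarge⟩ := h
  have hn : 0 ≤ n := by
    by_contra! hn
    have : n * d ^ 2 < 0 := mul_neg_of_neg_of_pos hn (by positivity)
    have : 0 ≤ 1000 * Δ ^ 6 := by positivity
    linarith
  refine le_of_mul_le_mul_right ?_ (show 0 < Δ ^ 2 by positivity)
  calc 1000 * Δ ^ 4 * Δ ^ 2 = 1000 * Δ ^ 6 := by ring
    _ ≤ n * d ^ 2 := hlarge
    _ ≤ n * Δ ^ 2 := by gcongr

lemma linear_le (h : SparseRange n d Δ) : 1000 * Δ ≤ n := by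
  linarith [h.quartic_le, le_self_pow₀ h.one_le (show 4 ≠ 0 by norm_num)]

lemma n_pos (h : SparseRange n d Δ) : 0 < n := by linarith [h.linear_le, h.one_le]

lemma sq_le_sum (h : SparseRange n d Δ) : 100 * Δ ^ 2 ≤ n * d := by
  have hn := h.n_pos
  obtain ⟨hΔ, hd, hle, hlarge⟩ := h
  have hquintic : 1000 * Δ ^ 5 ≤ n * d := by
    refine le_of_mul_le_mul_right ?_ (show 0 < Δ by positivity)
    calc 1000 * Δ ^ 5 * Δ = 1000 * Δ ^ 6 := by ring
      _ ≤ n * d ^ 2 := hlarge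
      _ = n * d * d := by ring
      _ ≤ n * d * Δ := by gcongr
  have hpow : Δ ^ 2 ≤ Δ ^ 5 := pow_le_pow_right₀ hΔ (by norm_num)
  linarith [sq_nonneg Δ]

lemma quartic_div_le (h : SparseRange n d Δ) : Δ ^ 4 / n ≤ Δ ^ 6 / (n * d ^ 2) := by
  have hn := h.n_pos
  obtain ⟨hΔ, hd, hle, -⟩ := h
  rw [div_le_div_iff₀ hn (by positivity)]
  calc Δ ^ 4 * (n * d ^ 2) ≤ Δ ^ 4 * (n * Δ ^ 2) := by gcongr
    _ = Δ ^ 6 * n := by ring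

lemma quartic_div_sum_le (h : SparseRange n d Δ) : Δ ^ 4 / (n * d) ≤ Δ ^ 6 / (n * d ^ 2) := by
  have hn := h.n_pos
  obtain ⟨hΔ, hd, hle, -⟩ := h
  rw [div_le_div_iff₀ (by positivity) (by positivity)]
  calc Δ ^ 4 * (n * d ^ 2) = Δ ^ 4 * (n * d * d) := by ring
    _ ≤ Δ ^ 4 * (n * d * Δ ^ 2) := by gcongr; nlinarith
    _ = Δ ^ 6 * (n * d) := by ring

lemma inv_pred_le (h : SparseRange n d Δ) : 1 / (n - 1) ≤ 2 / n := by
  have := h.linear_le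
  have := h.one_le
  rw [div_le_div_iff₀ (by linarith) h.n_pos]
  linarith

lemma mul_inv_pred_sq_le (h : SparseRange n d Δ) : n * (1 / (n - 1)) ^ 2 ≤ 4 / n := by
  have hn := h.n_pos
  have : 0 < n - 1 := by linarith [h.linear_le, h.one_le]
  have hinv := h.inv_pred_le
  calc n * (1 / (n - 1)) ^ 2 ≤ n * (2 / n) ^ 2 := by gcongr
    _ = 4 / n := by field_simp; norm_num

lemma falling_error_le (h : SparseRange n d Δ) (hm : 2 * m = n * d) :
    m * (2 * (2 * m / (n * (n - 1))) ^ 2) +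
      (m * (2 * (1 / n) ^ 2) + 2 * m * (2 * (Δ / (n - 1)) ^ 2)) ≤ 14 * (Δ ^ 6 / (n * d ^ 2)) := by
  have hn := h.n_pos
  have hpred : 0 < n - 1 := by linarith [h.linear_le, h.one_le]
  have hinv := h.mul_inv_pred_sq_le
  have hquartic := h.quartic_div_le
  obtain ⟨hΔ, hd, hle, -⟩ := h
  obtain rfl : m = n * d / 2 := by linarith
  have hcube : Δ ^ 3 ≤ Δ ^ 4 := pow_le_pow_right₀ hΔ (by norm_num)
  have hdcube : d ^ 3 ≤ Δ ^ 4 := (pow_le_pow_left₀ hd.le hle 3).trans hcube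
  have hdsq : d * Δ ^ 2 ≤ Δ ^ 4 := by nlinarith [sq_nonneg Δ]
  have hdquartic : d ≤ Δ ^ 4 := hle.trans (le_self_pow₀ hΔ (by norm_num))
  have hodd : n * d / 2 * (2 * (2 * (n * d / 2) / (n * (n - 1))) ^ 2) ≤ 4 * (Δ ^ 4 / n) := by
    calc _ = d ^ 3 * (n * (1 / (n - 1)) ^ 2) := by field_simp
      _ ≤ Δ ^ 4 * (4 / n) := by gcongr
      _ = 4 * (Δ ^ 4 / n) := by ring
  have hpow : n * d / 2 * (2 * (1 / n) ^ 2) ≤ Δ ^ 4 / n := by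
    calc _ = d / n := by field_simp
      _ ≤ Δ ^ 4 / n := by gcongr
  have hdesc : 2 * (n * d / 2) * (2 * (Δ / (n - 1)) ^ 2) ≤ 8 * (Δ ^ 4 / n) := by
    calc _ = 2 * (d * Δ ^ 2) * (n * (1 / (n - 1)) ^ 2) := by field_simp
      _ ≤ 2 * Δ ^ 4 * (4 / n) := by gcongr
      _ = 8 * (Δ ^ 4 / n) := by ring
  have : 0 ≤ Δ ^ 4 / n := by positivity
  linarith

lemma exponent_sub_eq (h : SparseRange n d Δ) (hm : 2 * m = n * d) {T : ℝ}
    (hT : T = σ * (n * d) + n * d ^ 2 - n * d) :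
    T / (2 * (n - 1)) + m / n - m ^ 2 / (n * (n - 1)) -
        (T / (2 * (2 * m)) + (T / (2 * (2 * m))) ^ 2) -
        (1 / 4 - σ ^ 2 * n ^ 2 / (4 * (n - 1 - d) ^ 2)) =
      (d ^ 2 / 4 + σ * d / 2 - d / 2) / (n - 1) +
        σ ^ 2 / 4 * ((n ^ 2 - (n - 1 - d) ^ 2) / (n - 1 - d) ^ 2) := by
  have hn := h.n_pos
  have hlin := h.linear_le
  obtain ⟨hΔ, hd, hle, -⟩ := h
  have hpred : n - 1 ≠ 0 := by linarith
  have hpred' : n - 1 - d ≠ 0 := by linarith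
  obtain rfl : m = n * d / 2 := by linarith
  have hpairs : T / (2 * (2 * (n * d / 2))) = σ / 2 + d / 2 - 1 / 2 := by
    rw [hT]
    field_simp
  have hfalling : T / (2 * (n - 1)) + n * d / 2 / n - (n * d / 2) ^ 2 / (n * (n - 1)) =
      d ^ 2 / 4 + σ * d / 2 + (d ^ 2 / 4 + σ * d / 2 - d / 2) / (n - 1) := by
    rw [hT]
    field_simp
    ring
  have hvariance : σ ^ 2 * n ^ 2 / (4 * (n - 1 - d) ^ 2) =
      σ ^ 2 / 4 + σ ^ 2 / 4 * ((n ^ 2 - (n - 1 - d) ^ 2) / (n - 1 - d) ^ 2) := by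
    field_simp
    ring
  rw [hpairs, hfalling, hvariance]
  ring

lemma abs_linear_term_le (h : SparseRange n d Δ) (hσ : σ ∈ Set.Icc 0 Δ) :
    |(d ^ 2 / 4 + σ * d / 2 - d / 2) / (n - 1)| ≤ 2 * (Δ ^ 6 / (n * d ^ 2)) := by
  have hlin := h.linear_le
  have hinv := h.inv_pred_le
  have hquartic := h.quartic_div_le
  obtain ⟨hΔ, hd, hle, -⟩ := h
  obtain ⟨hσ₀, hσΔ⟩ := hσ
  have hsq : d ^ 2 ≤ Δ ^ 2 := pow_le_pow_left₀ hd.le hle 2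
  have hmul : σ * d ≤ Δ ^ 2 := by nlinarith
  have hpow : Δ ^ 2 ≤ Δ ^ 4 := pow_le_pow_right₀ hΔ (by norm_num)
  have hpow' : Δ ≤ Δ ^ 4 := le_self_pow₀ hΔ (by norm_num)
  have hnum : |d ^ 2 / 4 + σ * d / 2 - d / 2| ≤ Δ ^ 4 := by
    rw [abs_le]
    constructor <;> linarith [mul_nonneg hσ₀ hd.le, sq_nonneg d]
  have hpred : 0 < n - 1 := by linarith
  rw [abs_div, abs_of_pos hpred, div_eq_mul_one_div]
  calc |d ^ 2 / 4 + σ * d / 2 - d / 2| * (1 / (n - 1)) ≤ Δ ^ 4 * (2 / n) := by gcongr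
    _ = 2 * (Δ ^ 4 / n) := by ring
    _ ≤ 2 * (Δ ^ 6 / (n * d ^ 2)) := by linarith

lemma abs_variance_term_le (h : SparseRange n d Δ) (hσ : σ ∈ Set.Icc 0 Δ) :
    |σ ^ 2 / 4 * ((n ^ 2 - (n - 1 - d) ^ 2) / (n - 1 - d) ^ 2)| ≤
      4 * (Δ ^ 6 / (n * d ^ 2)) := by
  have hn := h.n_pos
  have hlin := h.linear_le
  have hquartic := h.quartic_div_le
  obtain ⟨hΔ, hd, hle, -⟩ := h
  obtain ⟨hσ₀, hσΔ⟩ := hσ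
  have hfactor : n ^ 2 - (n - 1 - d) ^ 2 = (1 + d) * (2 * n - 1 - d) := by ring
  have hnum₀ : 0 ≤ n ^ 2 - (n - 1 - d) ^ 2 := by
    rw [hfactor]
    exact mul_nonneg (by linarith) (by linarith)
  have hnum : n ^ 2 - (n - 1 - d) ^ 2 ≤ 4 * Δ * n := by
    rw [hfactor]
    calc (1 + d) * (2 * n - 1 - d) ≤ 2 * Δ * (2 * n) :=
          mul_le_mul (by linarith) (by linarith) (by linarith) (by linarith)
      _ = 4 * Δ * n := by ring
  have hden : (n / 2) ^ 2 ≤ (n - 1 - d) ^ 2 := pow_le_pow_left₀ (by positivity) (by linarith) 2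
  rw [abs_of_nonneg (by positivity)]
  calc σ ^ 2 / 4 * ((n ^ 2 - (n - 1 - d) ^ 2) / (n - 1 - d) ^ 2)
      ≤ Δ ^ 2 / 4 * (4 * Δ * n / (n / 2) ^ 2) := by gcongr
    _ = 4 * (Δ ^ 3 / n) := by field_simp; ring
    _ ≤ 4 * (Δ ^ 4 / n) := by gcongr; norm_num
    _ ≤ 4 * (Δ ^ 6 / (n * d ^ 2)) := by linarith

lemma exponent_error_le (h : SparseRange n d Δ) (hm : 2 * m = n * d) {T : ℝ}
    (hT : T = σ * (n * d) + n * d ^ 2 - n * d) (hσ : σ ∈ Set.Icc 0 Δ) :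
    |T / (2 * (n - 1)) + m / n - m ^ 2 / (n * (n - 1)) -
        (T / (2 * (2 * m)) + (T / (2 * (2 * m))) ^ 2) -
        (1 / 4 - σ ^ 2 * n ^ 2 / (4 * (n - 1 - d) ^ 2))| ≤ 6 * (Δ ^ 6 / (n * d ^ 2)) := by
  rw [h.exponent_sub_eq hm hT]
  refine (abs_add_le _ _).trans ?_
  linarith [h.abs_linear_term_le hσ, h.abs_variance_term_le hσ]

end SparseRange

section Variance

variable {ι : Type*} [Fintype ι] {x : ι → ℝ} {d Δ : ℝ}

lemma sum_mul_sub_one_eq (hmean : ∑ i, x i = Fintype.card ι * d) :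
    ∑ i, x i * (x i - 1) =
      ∑ i, (x i - d) ^ 2 + Fintype.card ι * d ^ 2 - Fintype.card ι * d := by
  have hterm : ∀ i, x i * (x i - 1) = (x i - d) ^ 2 + (2 * d - 1) * x i - d ^ 2 := fun i => by ring
  simp only [hterm, sum_add_distrib, sum_sub_distrib, ← mul_sum, hmean, sum_const, card_univ,
    nsmul_eq_mul]
  ring

lemma sum_sub_sq_le (hmean : ∑ i, x i = Fintype.card ι * d) (hx : ∀ i, x i ∈ Set.Icc 0 Δ) :
    ∑ i, (x i - d) ^ 2 ≤ Δ * (Fintype.card ι * d) := by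
  have hsq : ∑ i, x i * (x i - 1) ≤ ∑ i, (Δ - 1) * x i := sum_le_sum fun i _ => by
    nlinarith [(hx i).1, (hx i).2]
  rw [sum_mul_sub_one_eq hmean, ← mul_sum, hmean] at hsq
  nlinarith [mul_nonneg (Nat.cast_nonneg (α := ℝ) (Fintype.card ι)) (sq_nonneg d)]

end Variance

/-! ### The enumeration formula -/

section Enumeration

variable {n m Δ : ℕ} {D : Fin n → ℕ} {d : ℝ}

lemma sparseRange_of_degrees (hsum : ∑ i, D i = 2 * m) (hD : ∀ i, D i ≤ Δ) (hd : d = 2 * m / n)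
    (hpos : 0 < n * d ^ 2) (hlarge : 1000 * (Δ : ℝ) ^ 6 ≤ n * d ^ 2) : SparseRange n d Δ := by
  have hd₀ : 0 < d := by
    refine lt_of_le_of_ne (by rw [hd]; positivity) fun h => ?_
    simp [← h] at hpos
  have hn : (0 : ℝ) < n := pos_of_mul_pos_left hpos (sq_nonneg d)
  have hdΔ : d ≤ Δ := by
    rw [hd, div_le_iff₀ hn]
    have : ∑ i, D i ≤ n * Δ := by simpa using sum_le_card_nsmul univ D Δ fun i _ => hD i
    rw [hsum, mul_comm n] at this
    exact_mod_cast this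
  refine ⟨?_, hd₀, hdΔ, hlarge⟩
  exact_mod_cast Nat.one_le_iff_ne_zero.2 fun h => by simp [h] at hdΔ; linarith

lemma SparseRange.sparseDegrees (h : SparseRange n d Δ) (hsum : ∑ i, D i = 2 * m)
    (hD : ∀ i, D i ≤ Δ) (hnd : 2 * (m : ℝ) = n * d) :
    SparseDegrees (fun i => (D i : ℤ)) Δ (2 * m) where
  nonneg i := Int.natCast_nonneg (D i)
  le i := Int.ofNat_le.2 (hD i)
  one_le := by exact_mod_cast h.one_le
  sum_eq := by exact_mod_cast hsum
  sq_le := by simpa only [Int.cast_natCast, hnd] using h.sq_le_sum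

lemma SparseRange.variance_mem_Icc (h : SparseRange n d Δ) (hsum : ∑ i, (D i : ℝ) = n * d)
    (hD : ∀ i, D i ≤ Δ) : (∑ i, ((D i : ℝ) - d) ^ 2) / (n * d) ∈ Set.Icc (0 : ℝ) Δ := by
  have hn := h.n_pos
  have hd := h.pos
  refine ⟨by positivity, ?_⟩
  rw [div_le_iff₀ (by positivity)]
  have := sum_sub_sq_le (by rwa [Fintype.card_fin])
    fun i => ⟨Nat.cast_nonneg (D i), Nat.cast_le.2 (hD i)⟩
  rwa [Fintype.card_fin] at this

theorem SparseRange.expClose_prG (h : SparseRange n d Δ) (hsum : ∑ i, D i = 2 * m)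
    (hD : ∀ i, D i ≤ Δ) (hnd : 2 * (m : ℝ) = n * d) :
    ExpClose (97 * ((Δ : ℝ) ^ 6 / (n * d ^ 2))) (prG n m D)
      (prB n m D * Real.exp (1 / 4 - ((∑ i, ((D i : ℝ) - d) ^ 2) / (n * d)) ^ 2 * (n : ℝ) ^ 2 /
        (4 * (n - 1 - d) ^ 2))) := by
  have hsum' : ∑ i, (D i : ℝ) = n * d := by
    rw [← hnd]
    exact_mod_cast hsum
  have hlin := h.linear_le
  have hone := h.one_le
  have hle := h.le
  have hn := h.n_pos
  have hΔ : 2 * Δ ≤ n - 1 := by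
    have : 2 * Δ + 1 ≤ n := by exact_mod_cast (by linarith : 2 * (Δ : ℝ) + 1 ≤ n)
    omega
  have hm : 4 * (m : ℝ) ≤ n * (n - 1) := by nlinarith
  have hσ := h.variance_mem_Icc hsum' hD
  set σ := (∑ i, ((D i : ℝ) - d) ^ 2) / (n * d) with hσ_def
  have hT : ∑ i, (D i : ℝ) * (D i - 1) = σ * (n * d) + n * d ^ 2 - n * d := by
    rw [sum_mul_sub_one_eq (by rwa [Fintype.card_fin]), Fintype.card_fin, hσ_def,
      div_mul_cancel₀ _ (mul_pos hn h.pos).ne']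
  have hexponent := h.exponent_error_le hnd hT hσ
  have hratio := _root_.expClose_prG (h.sparseDegrees hsum hD hnd) hΔ hm
  refine (hratio.trans ((ExpClose.exp hexponent).const_mul _)).mono ?_
  have hfalling := h.falling_error_le hnd
  have hcount := h.quartic_div_sum_le
  rw [← hnd] at hcount
  rw [mul_div_assoc (77 : ℝ)]
  linarith

lemma gamma_sq_div_eq {n d μ γ₂ S : ℝ} (hnd : n * d ≠ 0) (hn : n - 1 ≠ 0) (hμ : μ = d / (n - 1))
    (hγ₂ : γ₂ = S / (n - 1) ^ 2) :
    γ₂ ^ 2 / (4 * μ ^ 2 * (1 - μ) ^ 2) = (S / (n * d)) ^ 2 * n ^ 2 / (4 * (n - 1 - d) ^ 2) := by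
  obtain ⟨hn₀, hd₀⟩ := mul_ne_zero_iff.1 hnd
  have hcompl : 1 - μ = (n - 1 - d) / (n - 1) := by
    rw [hμ]
    field_simp
  rw [hcompl, hμ, hγ₂]
  field_simp

lemma ExpClose.exists_eq_mul_one_add {b x y : ℝ} (h : ExpClose b x y) (hb : b ≤ 1) :
    ∃ E, |E| ≤ 2 * b ∧ x = y * (1 + E) := by
  obtain ⟨r, hr, rfl⟩ := h
  refine ⟨Real.exp r - 1, ?_, by ring⟩
  linarith [Real.abs_exp_sub_one_le (hr.trans hb)]

theorem sparse_enumeration_general {μ γ₂ : ℝ} (hd : d = 2 * m / n) (hμ : μ = d / (n - 1))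
    (hγ₂ : γ₂ = (∑ i, ((D i : ℝ) - d) ^ 2) / ((n : ℝ) - 1) ^ 2) (hsum : ∑ i, D i = 2 * m)
    (hD : ∀ i, D i ≤ Δ) (hpos : 0 < n * d ^ 2) (hlarge : 1000 * (Δ : ℝ) ^ 6 ≤ n * d ^ 2) :
    ∃ E : ℝ, |E| ≤ 194 * ((Δ : ℝ) ^ 6 / (n * d ^ 2)) ∧
      prG n m D = prB n m D *
        Real.exp (1 / 4 - γ₂ ^ 2 / (4 * μ ^ 2 * (1 - μ) ^ 2)) * (1 + E) := by
  have hrange := sparseRange_of_degrees hsum hD hd hpos hlarge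
  have hn := hrange.n_pos
  have hnd : 2 * (m : ℝ) = n * d := by
    rw [hd]
    field_simp
  have herror : (Δ : ℝ) ^ 6 / (n * d ^ 2) ≤ 1 / 1000 := by
    rw [div_le_iff₀ hpos]
    linarith
  rw [gamma_sq_div_eq (mul_pos hn hrange.pos).ne' (by linarith [hrange.linear_le, hrange.one_le])
    hμ hγ₂]
  obtain ⟨E, hE, hprG⟩ :=
    (hrange.expClose_prG hsum hD hnd).exists_eq_mul_one_add (by linarith)
  exact ⟨E, by linarith, hprG⟩

end Enumeration

theorem sparse_enumeration :
    ∀ ε : ℝ, 0 < ε →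
      ∃ A η : ℝ, 0 < A ∧ 0 < η ∧
        ∃ n₀ : ℕ, ∀ n : ℕ, n₀ ≤ n → ∀ m : ℕ,
          let d : ℝ := 2 * (m : ℝ) / (n : ℝ)
          0 < (n : ℝ) * d ^ 2 →
          ∀ D : Fin n → ℕ, (∑ i, D i) = 2 * m →
            (((Finset.univ.sup D : ℕ) : ℝ) ^ 6 + (n : ℝ) ^ ε ≤ η * (n : ℝ) * d ^ 2) →
            let μ : ℝ := d / ((n : ℝ) - 1)
            let γ₂ : ℝ := (∑ i, ((D i : ℝ) - d) ^ 2) / ((n : ℝ) - 1) ^ 2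
            ∃ E : ℝ,
              |E| ≤ A * ((((Finset.univ.sup D : ℕ) : ℝ) ^ 6 + (n : ℝ) ^ ε) / ((n : ℝ) * d ^ 2) +
                (n : ℝ) ^ (ε - 1 / 2)) ∧
              prG n m D = prB n m D *
                Real.exp (1 / 4 - γ₂ ^ 2 / (4 * μ ^ 2 * (1 - μ) ^ 2)) * (1 + E) := by
  intro ε _
  refine ⟨194, 1 / 1000, by norm_num, by norm_num, 0, ?_⟩
  intro n _ m d hpos D hsum hsparse μ γ₂
  have hpow : 0 ≤ (n : ℝ) ^ ε := by positivity
  obtain ⟨E, hE, hprG⟩ := sparse_enumeration_general (d := d) (μ := μ) (γ₂ := γ₂) rfl rfl rfl hsum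
    (fun i => le_sup (mem_univ i)) hpos (by linarith)
  refine ⟨E, hE.trans ?_, hprG⟩
  gcongr
  calc ((univ.sup D : ℕ) : ℝ) ^ 6 / (n * d ^ 2)
      ≤ (((univ.sup D : ℕ) : ℝ) ^ 6 + (n : ℝ) ^ ε) / (n * d ^ 2) := by gcongr; linarith
    _ ≤ _ := le_add_of_nonneg_right (by positivity)
end
end

section
/- Let U be a finite set, m ≤ |U| a positive integer, c > 0, and f a real-valued function on the m-element subsets of U such that |f(S) − f(T)| ≤ c whenever |S| = |T| = m and |S ∩ T| = m − 1. Let S be a uniformly random m-element subset of U. Then for all α > 0, Pr( |f(S) − E f(S)| ≥ α c √m ) ≤ 2 exp(−2α²). -/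
open Finset

/-!
Choose the random `m`-subset `S` of `A` by picking its elements one at a time, and let `g x` be the
conditional mean of `f S` when the first element is `x`. Applying the transposition of `x` and `y`
to `S` couples the conditional laws for `x` and `y` so that the two sets differ by at most one
exchange; hence `g` has oscillation at most `c`. Hoeffding's lemma bounds the moment generating
function of the centred `g` with variance proxy `(c / 2) ^ 2`, and induction on `m` treats the
remaining `m - 1` elements, so `f S` is sub-Gaussian with variance proxy `m * (c / 2) ^ 2`. The
theorem is the two-sided Chernoff bound for this proxy.
-/

open MeasureTheory ProbabilityTheory
open scoped BigOperators NNReal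

section UniformOn

variable {ι : Type*} {s : Finset ι}

section Measure

variable [MeasurableSpace ι] [MeasurableSingletonClass ι]

lemma restrict_uniformOn_finset : (uniformOn (s : Set ι)).restrict s = uniformOn s :=
  Measure.restrict_eq_self_of_ae_mem (ae_cond_mem s.measurableSet)

lemma integrable_uniformOn_finset (g : ι → ℝ) : Integrable g (uniformOn (s : Set ι)) := by
  rw [← restrict_uniformOn_finset]
  exact IntegrableOn.finset

lemma integral_uniformOn_finset (g : ι → ℝ) : ∫ i, g i ∂uniformOn (s : Set ι) = 𝔼 i ∈ s, g i := by
  have mass (i : ι) (hi : i ∈ s) : (uniformOn (s : Set ι)).real {i} = (#s : ℝ)⁻¹ := by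
    classical
    rw [measureReal_def, ← coe_singleton, uniformOn_apply_finset, inter_singleton_of_mem hi]
    simp
  rw [← restrict_uniformOn_finset, setIntegral_finset s IntegrableOn.finset, expect_eq_sum_div_card,
    sum_div]
  exact sum_congr rfl fun i hi ↦ by rw [mass i hi, smul_eq_mul, inv_mul_eq_div]

lemma measureReal_uniformOn_finset (p : ι → Prop) [DecidablePred p] :
    (uniformOn (s : Set ι)).real {i | p i} = #{i ∈ s | p i} / #s := by
  classical
  have inter_eq : (s : Set ι) ∩ {i | p i} = ({i ∈ s | p i} : Finset ι) := (coe_filter p s).symm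
  rw [measureReal_def, ← uniformOn_inter_self s.finite_toSet, inter_eq, uniformOn_apply_finset,
    inter_eq_right.2 (filter_subset p s)]
  simp

lemma hasSubgaussianMGF_uniformOn_finset_iff {X : ι → ℝ} {v : ℝ≥0} :
    HasSubgaussianMGF X v (uniformOn (s : Set ι)) ↔
      ∀ t, 𝔼 i ∈ s, Real.exp (t * X i) ≤ Real.exp (v * t ^ 2 / 2) := by
  simp only [← integral_uniformOn_finset]
  exact ⟨fun h ↦ h.mgf_le, fun h ↦ ⟨fun _ ↦ integrable_uniformOn_finset _, h⟩⟩

end Measure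

lemma expect_exp_mul_sub_expect_le_of_sub_le {g : ι → ℝ} {c : ℝ≥0}
    (hg : ∀ i ∈ s, ∀ j ∈ s, g i - g j ≤ c) (t : ℝ) :
    𝔼 i ∈ s, Real.exp (t * (g i - 𝔼 j ∈ s, g j)) ≤ Real.exp ((c / 2) ^ 2 * t ^ 2 / 2) := by
  rcases s.eq_empty_or_nonempty with rfl | hs
  · simp [Real.exp_nonneg]
  let _ : MeasurableSpace ι := ⊤
  have := isProbabilityMeasure_uniformOn s.finite_toSet hs
  obtain ⟨j, hj, g_min⟩ := exists_min_image s g hs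
  have g_mem : ∀ᵐ i ∂uniformOn (s : Set ι), g i ∈ Set.Icc (g j) (g j + c) := by
    filter_upwards [ae_cond_mem s.measurableSet] with i hi
    exact ⟨g_min i hi, by linarith [hg i hi j hj]⟩
  have hoeffding := hasSubgaussianMGF_of_mem_Icc measurable_from_top.aemeasurable g_mem
  rw [integral_uniformOn_finset, hasSubgaussianMGF_uniformOn_finset_iff] at hoeffding
  simpa using hoeffding t

lemma card_filter_le_abs_div_card_le {X : ι → ℝ} {v : ℝ≥0}
    (hX : ∀ t, 𝔼 i ∈ s, Real.exp (t * X i) ≤ Real.exp (v * t ^ 2 / 2)) {ε : ℝ} (hε : 0 ≤ ε) :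
    (#{i ∈ s | ε ≤ |X i|} : ℝ) / #s ≤ 2 * Real.exp (-ε ^ 2 / (2 * v)) := by
  let _ : MeasurableSpace ι := ⊤
  have subgaussian : HasSubgaussianMGF X v (uniformOn (s : Set ι)) :=
    hasSubgaussianMGF_uniformOn_finset_iff.2 hX
  calc (#{i ∈ s | ε ≤ |X i|} : ℝ) / #s
      = (uniformOn (s : Set ι)).real ({i | ε ≤ X i} ∪ {i | ε ≤ (-X) i}) := by
        rw [← measureReal_uniformOn_finset]
        simp only [le_abs, Set.ofPred_or, Pi.neg_apply]
    _ ≤ (uniformOn (s : Set ι)).real {i | ε ≤ X i} +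
          (uniformOn (s : Set ι)).real {i | ε ≤ (-X) i} :=
        measureReal_union_le _ _
    _ ≤ 2 * Real.exp (-ε ^ 2 / (2 * v)) := by
        linarith [subgaussian.measure_ge_le hε, subgaussian.neg.measure_ge_le hε]

end UniformOn

lemma inv_choose_succ {K : Type*} [Semifield K] [CharZero K] (n m : ℕ) :
    (n.choose (m + 1) : K)⁻¹ = (n : K)⁻¹ * ((n - 1).choose m : K)⁻¹ * (m + 1 : ℕ) := by
  rcases n with _ | n
  · simp
  · rw [← mul_inv, Nat.add_sub_cancel, ← Nat.cast_mul, Nat.add_one_mul_choose_eq, Nat.cast_mul,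
      mul_inv, inv_mul_cancel_right₀ (Nat.cast_ne_zero.2 m.succ_ne_zero)]

section PowersetCard

variable {U : Type*} [DecidableEq U] {A : Finset U} {m : ℕ}

section ChooseFirst

variable {M : Type*} [AddCommMonoid M]

lemma sum_sum_powersetCard_erase_insert (F : Finset U → M) :
    ∑ x ∈ A, ∑ T ∈ (A.erase x).powersetCard m, F (insert x T) =
      (m + 1) • ∑ S ∈ A.powersetCard (m + 1), F S := by
  calc ∑ x ∈ A, ∑ T ∈ (A.erase x).powersetCard m, F (insert x T)
      = ∑ x ∈ A, ∑ S ∈ A.powersetCard (m + 1) with x ∈ S, F S := by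
        refine sum_congr rfl fun x hx ↦ sum_nbij' (insert x) (erase · x) ?_ ?_ ?_ ?_ ?_
        all_goals grind
    _ = ∑ S ∈ A.powersetCard (m + 1), ∑ _x ∈ S, F S := sum_comm' (by grind)
    _ = (m + 1) • ∑ S ∈ A.powersetCard (m + 1), F S := by
        rw [smul_sum]
        exact sum_congr rfl fun S hS ↦ by rw [sum_const, (mem_powersetCard.1 hS).2]

lemma expect_powersetCard_succ [Module ℚ≥0 M] (F : Finset U → M) :
    𝔼 S ∈ A.powersetCard (m + 1), F S =
      𝔼 x ∈ A, 𝔼 T ∈ (A.erase x).powersetCard m, F (insert x T) := by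
  have inner_expect (x : U) (hx : x ∈ A) : 𝔼 T ∈ (A.erase x).powersetCard m, F (insert x T) =
      ((#A - 1).choose m : ℚ≥0)⁻¹ • ∑ T ∈ (A.erase x).powersetCard m, F (insert x T) := by
    rw [expect, card_powersetCard, card_erase_of_mem hx]
  rw [expect_congr rfl inner_expect, expect, expect, card_powersetCard, ← smul_sum,
    sum_sum_powersetCard_erase_insert, ← Nat.cast_smul_eq_nsmul ℚ≥0, smul_smul, smul_smul,
    inv_choose_succ]

end ChooseFirst

lemma map_swap_eq_self {S : Finset U} {x y : U} (hx : x ∈ S) (hy : y ∈ S) :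
    S.map (Equiv.swap x y).toEmbedding = S :=
  map_perm fun z hz ↦ by
    rcases Equiv.swap_apply_ne_self_iff.1 hz with ⟨-, rfl | rfl⟩ <;> assumption

lemma inter_map_swap {S : Finset U} {x y : U} (hx : x ∈ S) (hy : y ∉ S) :
    S ∩ S.map (Equiv.swap x y).toEmbedding = S.erase x := by
  ext z
  simp only [mem_inter, mem_map_equiv, Equiv.symm_swap, mem_erase]
  grind

/-- `F` changes by at most `c` when one element of an `m`-subset of `A` is exchanged for another
element of `A`: the bounded-difference condition for functions of an `m`-subset. Writing the size of
the intersection as `#(S ∩ T) + 1 = m` makes the condition vacuous for `m = 0`. -/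
def ExchangeLipschitz (A : Finset U) (m : ℕ) (F : Finset U → ℝ) (c : ℝ≥0) : Prop :=
  ∀ S ∈ A.powersetCard m, ∀ T ∈ A.powersetCard m, #(S ∩ T) + 1 = m → |F S - F T| ≤ c

namespace ExchangeLipschitz

variable {F : Finset U → ℝ} {c : ℝ≥0}

lemma comp_insert (hF : ExchangeLipschitz A (m + 1) F c) {x : U} (hx : x ∈ A) :
    ExchangeLipschitz (A.erase x) m (fun T ↦ F (insert x T)) c := by
  intro S hS T hT hST
  refine hF _ (by grind) _ (by grind) ?_
  rw [← insert_inter_distrib]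
  grind

lemma sub_map_swap_le (hF : ExchangeLipschitz A m F c) {S : Finset U} (hS : S ∈ A.powersetCard m)
    {x y : U} (hx : x ∈ S) (hy : y ∈ A) :
    F S - F (S.map (Equiv.swap x y).toEmbedding) ≤ c := by
  obtain ⟨hSA, hSm⟩ := mem_powersetCard.1 hS
  by_cases hyS : y ∈ S
  · simp [map_swap_eq_self hx hyS]
  refine (le_abs_self _).trans (hF S hS _ (mem_powersetCard.2 ⟨?_, ?_⟩) ?_)
  · rw [← map_swap_eq_self (hSA hx) hy]
    exact map_subset_map.2 hSA
  · rw [card_map, hSm]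
  · rw [inter_map_swap hx hyS, card_erase_add_one hx, hSm]

lemma expect_insert_sub_expect_insert_le (hF : ExchangeLipschitz A (m + 1) F c) {x y : U}
    (hx : x ∈ A) (hy : y ∈ A) :
    𝔼 T ∈ (A.erase x).powersetCard m, F (insert x T) -
      𝔼 T ∈ (A.erase y).powersetCard m, F (insert y T) ≤ c := by
  let σ : U ↪ U := (Equiv.swap x y).toEmbedding
  have map_erase_eq : (A.erase x).map σ = A.erase y := by
    rw [map_erase, map_swap_eq_self hx hy]
    simp [σ]
  have coupling : 𝔼 T ∈ (A.erase y).powersetCard m, F (insert y T) =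
      𝔼 T ∈ (A.erase x).powersetCard m, F ((insert x T).map σ) := by
    rw [← map_erase_eq, powersetCard_map]
    simp [expect, map_insert, σ]
  rw [coupling, ← expect_sub_distrib]
  rcases ((A.erase x).powersetCard m).eq_empty_or_nonempty with h | h
  · simp [h]
  · exact expect_le h fun T hT ↦ hF.sub_map_swap_le (by grind) (mem_insert_self x T) hy

theorem expect_exp_mul_sub_expect_le (hF : ExchangeLipschitz A m F c) (t : ℝ) :
    𝔼 S ∈ A.powersetCard m, Real.exp (t * (F S - 𝔼 T ∈ A.powersetCard m, F T)) ≤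
      Real.exp (m * (c / 2) ^ 2 * t ^ 2 / 2) := by
  induction m generalizing A F with
  | zero => simp
  | succ m ih =>
    let g (x : U) : ℝ := 𝔼 T ∈ (A.erase x).powersetCard m, F (insert x T)
    have mean_eq : 𝔼 S ∈ A.powersetCard (m + 1), F S = 𝔼 x ∈ A, g x := expect_powersetCard_succ F
    have first_element : 𝔼 x ∈ A, Real.exp (t * (g x - 𝔼 y ∈ A, g y)) ≤
        Real.exp ((c / 2) ^ 2 * t ^ 2 / 2) :=
      expect_exp_mul_sub_expect_le_of_sub_le
        (fun x hx y hy ↦ hF.expect_insert_sub_expect_insert_le hx hy) t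
    have exp_split (x : U) (T : Finset U) : Real.exp (t * (F (insert x T) - 𝔼 y ∈ A, g y)) =
        Real.exp (t * (F (insert x T) - g x)) * Real.exp (t * (g x - 𝔼 y ∈ A, g y)) := by
      rw [← Real.exp_add]
      ring_nf
    rw [mean_eq, expect_powersetCard_succ]
    calc 𝔼 x ∈ A, 𝔼 T ∈ (A.erase x).powersetCard m,
          Real.exp (t * (F (insert x T) - 𝔼 y ∈ A, g y))
        = 𝔼 x ∈ A, (𝔼 T ∈ (A.erase x).powersetCard m, Real.exp (t * (F (insert x T) - g x))) *
            Real.exp (t * (g x - 𝔼 y ∈ A, g y)) := by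
          simp only [exp_split, expect_mul]
      _ ≤ 𝔼 x ∈ A, Real.exp (m * (c / 2) ^ 2 * t ^ 2 / 2) *
            Real.exp (t * (g x - 𝔼 y ∈ A, g y)) :=
          expect_le_expect fun x hx ↦ by gcongr; exact ih (hF.comp_insert hx)
      _ ≤ Real.exp (m * (c / 2) ^ 2 * t ^ 2 / 2) * Real.exp ((c / 2) ^ 2 * t ^ 2 / 2) := by
          rw [← mul_expect]
          gcongr
      _ = Real.exp ((m + 1 : ℕ) * (c / 2) ^ 2 * t ^ 2 / 2) := by
          rw [← Real.exp_add]
          push_cast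
          ring_nf

theorem card_filter_le_abs_sub_expect_div_card_le (hF : ExchangeLipschitz A m F c) {ε : ℝ}
    (hε : 0 ≤ ε) :
    (#{S ∈ A.powersetCard m | ε ≤ |F S - 𝔼 T ∈ A.powersetCard m, F T|} : ℝ) /
      #(A.powersetCard m) ≤ 2 * Real.exp (-2 * ε ^ 2 / (m * c ^ 2)) := by
  have chernoff := card_filter_le_abs_div_card_le (v := m * (c / 2) ^ 2)
    (fun t ↦ by simpa using hF.expect_exp_mul_sub_expect_le t) hε
  refine chernoff.trans_eq ?_
  push_cast
  congr 2
  ring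

end ExchangeLipschitz

end PowersetCard

open scoped Classical in
/-- McDiarmid-type concentration for functions of a uniformly random `m`-subset. -/
theorem subset_concentration {U : Type*} [Fintype U] [DecidableEq U]
    (m : ℕ) (hm : 0 < m) (hmU : m ≤ Fintype.card U)
    (c : ℝ) (hc : 0 < c) (f : Finset U → ℝ)
    (hf : ∀ S T : Finset U, S.card = m → T.card = m → (S ∩ T).card = m - 1 →
      |f S - f T| ≤ c)
    (α : ℝ) (hα : 0 < α) :
    (((((Finset.univ : Finset U).powersetCard m)).filter
          (fun S => α * c * Real.sqrt m ≤
            |f S - (∑ T ∈ (Finset.univ : Finset U).powersetCard m, f T) /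
              ((((Finset.univ : Finset U).powersetCard m)).card : ℝ)|)).card : ℝ) /
        ((((Finset.univ : Finset U).powersetCard m)).card : ℝ) ≤
      2 * Real.exp (-2 * α ^ 2) := by
  lift c to ℝ≥0 using hc.le
  have exchange : ExchangeLipschitz univ m f c := fun S hS T hT hST ↦
    hf S T (mem_powersetCard.1 hS).2 (mem_powersetCard.1 hT).2 (by lia)
  have tail := exchange.card_filter_le_abs_sub_expect_div_card_le
    (ε := α * c * Real.sqrt m) (by positivity)
  have exponent : -2 * (α * c * Real.sqrt m) ^ 2 / (m * c ^ 2) = -2 * α ^ 2 := by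
    rw [mul_pow, Real.sq_sqrt m.cast_nonneg]
    field_simp
  rwa [exponent, expect_eq_sum_div_card] at tail
end
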